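/- arXiv:0804.2166 — 2 statements merged into one kernel-verified Lean document; each statement's English description precedes it below -/
import Mathlib

section
/- For ℓ ≥ 3 a prime, any subgroup of Sp(2g, 𝔽_ℓ) containing at least ℓ^{2g-1} transvections is equal to Sp(2g, 𝔽_ℓ). -/
/-- A transvection in the symplectic group: an element `τ ≠ 1` such that `τ - 1` has
rank one as a matrix. -/
def IsSymplecticTransvection {g ℓ : ℕ} (τ : Matrix.symplecticGroup (Fin g) (ZMod ℓ)) : Prop :=
  τ ≠ 1 ∧ ((τ : Matrix (Fin g ⊕ Fin g) (Fin g ⊕ Fin g) (ZMod ℓ)) - 1).rank = 1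

/-!
Every symplectic transvection has the form `u ↦ u + c ω(v, u) v`. Over a prime field, a subgroup
containing it for one `c ≠ 0` contains it for all `c`; let `C` be the set of such directions `v`,
together with `0`. If the subgroup contains `q ^ (n - 1)` transvections, then `|C| > q ^ (n - 1)`.
Conjugating its transvections by each other shows that `u + v ∈ C` for all non-orthogonal
`u, v ∈ C`.

The main point is that `C` is closed under addition, hence equal to the whole space by its size.
Suppose that `a, c ∈ C` but `x = a + c ∉ C`. An affine line of direction `x` not orthogonal to `x`
meets `C` at most once, since two points of `C` on it would be non-orthogonal and their difference
is a multiple of `x`. Counting along these lines yields `b ∈ C` orthogonal to `x` but not to `a`,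
and `|C| > q ^ (n - 1)` yields `d ∈ C` not orthogonal to `x`. As `q ≥ 3`, a combination of `b` and
`d` in `C` is orthogonal to none of `a`, `c`, `x`, and this forces `x ∈ C`.

It remains to see that transvections generate the isometry group: multiplying an isometry `σ ≠ 1`
by transvections along vectors `σ z - z` keeps the fixed vectors of `σ` fixed, and one or two of
them suffice to gain a new fixed vector.
-/

section LineCounting

variable {R V : Type*} [Ring R] [AddCommGroup V] [Module R V] [Finite V]

theorem card_mul_ncard_le_ncard_of_lines {S T : Set V} (x : V)
    (hST : ∀ u ∈ S, ∀ t : R, u + t • x ∈ T) (hS : ∀ u ∈ S, ∀ t : R, t ≠ 0 → u + t • x ∉ S) :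
    Nat.card R * S.ncard ≤ T.ncard := by
  rw [← Nat.card_coe_set_eq S, ← Nat.card_coe_set_eq T, ← Nat.card_prod]
  refine Nat.card_le_card_of_injective (fun p : R × S ↦ (⟨p.2 + p.1 • x, hST _ p.2.2 _⟩ : T)) ?_
  rintro ⟨s, u, hu⟩ ⟨t, w, hw⟩ h
  have huw : u + s • x = w + t • x := congrArg Subtype.val h
  obtain rfl : s = t := by
    by_contra hst
    refine hS u hu (s - t) (sub_ne_zero.mpr hst) ?_
    rwa [sub_smul, ← add_sub_assoc, huw, add_sub_cancel_right]
  simpa using huw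

theorem exists_add_smul_mem_of_card_lt {C : Set V} (hC : Nat.card V < Nat.card R * C.ncard)
    (x : V) : ∃ u ∈ C, ∃ t : R, t ≠ 0 ∧ u + t • x ∈ C := by
  by_contra! h
  exact hC.not_ge <| (card_mul_ncard_le_ncard_of_lines x (fun _ _ _ ↦ Set.mem_univ _) h).trans_eq
    (Set.ncard_univ V)

variable [NoZeroDivisors R]

theorem exists_mem_apply_ne_zero_of_card_lt {C : Set V}
    (hC : Nat.card V < Nat.card R * C.ncard) {f : V →ₗ[R] R} (hf : f ≠ 0) :
    ∃ d ∈ C, f d ≠ 0 := by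
  obtain ⟨v, hv⟩ := DFunLike.ne_iff.mp hf
  obtain ⟨u, hu, t, ht, hut⟩ := exists_add_smul_mem_of_card_lt hC v
  by_cases hfu : f u = 0
  · exact ⟨u + t • v, hut, by simpa [hfu, ht] using hv⟩
  · exact ⟨u, hu, hfu⟩

/-- The two halves `f ≠ 0` and `f = 0` of `C` are counted along lines of different directions, `x`
and `w`. -/
theorem exists_mem_ker_apply_ne_zero_of_card_lt {C : Set V}
    (hC : Nat.card V < Nat.card R * C.ncard) {f g : V →ₗ[R] R} {x : V} (hfx : f x = 0)
    (hx : ∀ u ∈ C, f u ≠ 0 → ∀ t : R, t ≠ 0 → u + t • x ∉ C)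
    (hfg : ¬ LinearMap.ker f ≤ LinearMap.ker g) :
    ∃ b ∈ C, f b = 0 ∧ g b ≠ 0 := by
  obtain ⟨w, hfw, hgw⟩ := SetLike.not_le_iff_exists.mp hfg
  rw [LinearMap.mem_ker] at hfw hgw
  by_contra! hCg
  let U : Set V := LinearMap.ker f
  have hker : Nat.card R * (C ∩ U).ncard ≤ U.ncard := by
    refine card_mul_ncard_le_ncard_of_lines w ?_ ?_
    · rintro u ⟨-, hu⟩ t
      simp_all [U]
    · rintro u ⟨huC, hu⟩ t ht ⟨hutC, hut⟩
      have := hCg u huC hu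
      have := hCg _ hutC hut
      simp_all
  have hcompl : Nat.card R * (C \ U).ncard ≤ Uᶜ.ncard := by
    refine card_mul_ncard_le_ncard_of_lines x ?_ ?_
    · rintro u ⟨-, hu⟩ t
      simp_all [U]
    · rintro u ⟨huC, hu⟩ t ht ⟨hutC, -⟩
      exact hx u huC hu t ht hutC
  rw [← Set.ncard_inter_add_ncard_sdiff_eq_ncard C U, mul_add, ← Set.ncard_add_ncard_compl U] at hC
  exact hC.not_ge (add_le_add hker hcompl)

end LineCounting

section TransvectionClosed

variable {K V : Type*} [Field K] [AddCommGroup V] [Module K V] {ω : V →ₗ[K] V →ₗ[K] K}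

theorem exists_smul_eq_of_ker_le_ker (hsep : ω.SeparatingLeft) {x y : V}
    (h : LinearMap.ker (ω x) ≤ LinearMap.ker (ω y)) : ∃ k : K, k • x = y := by
  have hspan : ω y ∈ Submodule.span K (Set.range fun _ : Unit ↦ ω x) :=
    mem_span_of_iInf_ker_le_ker (by simpa using h)
  rw [Set.range_const, Submodule.mem_span_singleton] at hspan
  obtain ⟨k, hk⟩ := hspan
  rw [← map_smul] at hk
  exact ⟨k, LinearMap.ker_eq_bot.mp (LinearMap.separatingLeft_iff_ker_eq_bot.mp hsep) hk⟩

/-- A set of vectors that is stable under scaling and under the transvections `u ↦ u + t ω(v, u) v`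
along its own members `v`. The directions of the transvections in a subgroup form such a set. -/
structure IsTransvectionClosed (ω : V →ₗ[K] V →ₗ[K] K) (C : Set V) : Prop where
  smul_mem : ∀ (t : K) {v : V}, v ∈ C → t • v ∈ C
  add_smul_mem : ∀ (t : K) {u v : V}, u ∈ C → v ∈ C → u + (t * ω v u) • v ∈ C

namespace IsTransvectionClosed

variable {C : Set V}

theorem smul_mem_iff (hC : IsTransvectionClosed ω C) {t : K} (ht : t ≠ 0) {v : V} :
    t • v ∈ C ↔ v ∈ C :=
  ⟨fun h ↦ by simpa [ht] using hC.smul_mem t⁻¹ h, hC.smul_mem t⟩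

theorem add_mem_of_apply_ne_zero (hC : IsTransvectionClosed ω C) {u v : V} (hu : u ∈ C)
    (hv : v ∈ C) (huv : ω u v ≠ 0) : u + v ∈ C := by
  simpa [huv, add_comm] using hC.add_smul_mem (ω u v)⁻¹ hv hu

theorem add_smul_notMem (hC : IsTransvectionClosed ω C) (hω : ω.IsAlt) {x u : V} (hx : x ∉ C)
    (hu : u ∈ C) (hxu : ω x u ≠ 0) {t : K} (ht : t ≠ 0) : u + t • x ∉ C := by
  intro hut
  have htx : u + t • x + (-1 : K) • u ∈ C :=
    hC.add_mem_of_apply_ne_zero hut (hC.smul_mem _ hu) (by simp [hω u, ht, hxu])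
  rw [neg_one_smul, add_neg_cancel_comm, hC.smul_mem_iff ht] at htx
  exact hx htx

/-- Write `a + c = (a - b) + (c + b)`: if `a` and `c` are orthogonal, the two summands are not. -/
theorem add_mem_of_common_apply_ne_zero (hC : IsTransvectionClosed ω C) (hω : ω.IsAlt)
    {a b c : V} (ha : a ∈ C) (hb : b ∈ C) (hc : c ∈ C) (hab : ω a b ≠ 0) (hcb : ω c b ≠ 0)
    (hacb : ω (a + c) b ≠ 0) : a + c ∈ C := by
  by_cases hac : ω a c = 0
  · have hsub : a + (-1 : K) • b ∈ C :=
      hC.add_mem_of_apply_ne_zero ha (hC.smul_mem _ hb) (by simpa using hab)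
    have hadd : c + b ∈ C := hC.add_mem_of_apply_ne_zero hc hb hcb
    have h : ω (a + (-1 : K) • b) (c + b) = ω (a + c) b := by
      simp [hac, hω b, hω.neg b c]
    convert hC.add_mem_of_apply_ne_zero hsub hadd (h ▸ hacb) using 1
    module
  · exact hC.add_mem_of_apply_ne_zero ha hc hac

theorem add_mem_of_orthogonal_witness (hC : IsTransvectionClosed ω C) (hω : ω.IsAlt)
    (hK : 3 ≤ ENat.card K) {a b c d : V} (ha : a ∈ C) (hb : b ∈ C) (hc : c ∈ C) (hd : d ∈ C)
    (hab : ω a b ≠ 0) (hacb : ω (a + c) b = 0) (had : ω a d ≠ 0) (hcd : ω c d = 0) :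
    a + c ∈ C := by
  obtain ⟨t, ht, htab⟩ := ENat.exists_ne_ne_of_three_le hK 0 (-(ω a b / ω a d))
  have hae : ω a (b + t • d) ≠ 0 := by
    contrapose! htab
    rw [map_add, map_smul, smul_eq_mul] at htab
    field_simp
    linear_combination htab
  have hce : ω c (b + t • d) = -ω a b := by
    rw [map_add, LinearMap.add_apply] at hacb
    simpa [hcd] using eq_neg_of_add_eq_zero_right hacb
  have he : b + t • d ∈ C := by
    refine hC.add_mem_of_common_apply_ne_zero hω hb ha (hC.smul_mem t hd) ?_ ?_ ?_
    · rwa [Ne, hω.eq_iff]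
    · rw [Ne, hω.eq_iff]
      simp [ht, had]
    · rwa [Ne, hω.eq_iff]
  refine hC.add_mem_of_common_apply_ne_zero hω ha he hc hae (by simpa [hce] using hab) ?_
  simp [hce, ht, had]

theorem add_mem_of_witnesses (hC : IsTransvectionClosed ω C) (hω : ω.IsAlt)
    (hK : 3 ≤ ENat.card K) {a b c d : V} (ha : a ∈ C) (hb : b ∈ C) (hc : c ∈ C) (hd : d ∈ C)
    (hab : ω a b ≠ 0) (hacb : ω (a + c) b = 0) (hacd : ω (a + c) d ≠ 0) : a + c ∈ C := by
  by_cases hcd : ω c d = 0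
  · have had : ω a d ≠ 0 := by simpa [hcd] using hacd
    exact hC.add_mem_of_orthogonal_witness hω hK ha hb hc hd hab hacb had hcd
  by_cases had : ω a d = 0
  · have hcb : ω c b ≠ 0 := by
      rintro hcb
      simp [hcb, hab] at hacb
    rw [add_comm] at hacb ⊢
    exact hC.add_mem_of_orthogonal_witness hω hK hc hb ha hd hcb hacb hcd had
  · exact hC.add_mem_of_common_apply_ne_zero hω ha hd hc had hcd hacd

theorem add_mem [Finite V] (hC : IsTransvectionClosed ω C) (hω : ω.IsAlt) (hsep : ω.SeparatingLeft)
    (hK : 3 ≤ ENat.card K) (hcard : Nat.card V < Nat.card K * C.ncard) {a c : V} (ha : a ∈ C)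
    (hc : c ∈ C) : a + c ∈ C := by
  by_contra hx
  have hne : ω (a + c) ≠ 0 := fun h ↦ hx <| by
    simpa [hsep (a + c) (LinearMap.congr_fun h)] using hC.smul_mem 0 ha
  have hker : ¬ LinearMap.ker (ω (a + c)) ≤ LinearMap.ker (ω a) := by
    intro hle
    obtain ⟨k, hk⟩ := exists_smul_eq_of_ker_le_ker hsep hle
    obtain rfl | hk₀ := eq_or_ne k 0
    · rw [zero_smul] at hk
      simp [← hk, hc] at hx
    · rw [← hk, hC.smul_mem_iff hk₀] at ha
      exact hx ha
  obtain ⟨b, hb, hacb, hab⟩ := exists_mem_ker_apply_ne_zero_of_card_lt hcard (hω (a + c))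
    (fun u hu hxu t ht ↦ hC.add_smul_notMem hω hx hu hxu ht) hker
  obtain ⟨d, hd, hacd⟩ := exists_mem_apply_ne_zero_of_card_lt hcard hne
  exact hx (hC.add_mem_of_witnesses hω hK ha hb hc hd hab hacb hacd)

theorem eq_univ [Finite V] (hC : IsTransvectionClosed ω C) (hω : ω.IsAlt) (hsep : ω.SeparatingLeft)
    (hK : 3 ≤ ENat.card K) (hcard : Nat.card V < Nat.card K * C.ncard) : C = Set.univ := by
  refine Set.eq_univ_of_forall fun x ↦ ?_
  obtain ⟨u, hu, t, ht, hut⟩ := exists_add_smul_mem_of_card_lt hcard x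
  have htx := hC.add_mem hω hsep hK hcard hut (hC.smul_mem (-1) hu)
  rwa [neg_one_smul, add_neg_cancel_comm, hC.smul_mem_iff ht] at htx

end IsTransvectionClosed

end TransvectionClosed

section Isometry

variable {R V : Type*} [CommRing R] [AddCommGroup V] [Module R V] {ω : V →ₗ[R] V →ₗ[R] R}

/-- The group of linear automorphisms preserving the bilinear form `ω`; for `ω` alternating and
nondegenerate it is the symplectic group of `ω`. -/
def isometryGroup (ω : V →ₗ[R] V →ₗ[R] R) : Subgroup (V ≃ₗ[R] V) where
  carrier := {σ | ∀ x y, ω (σ x) (σ y) = ω x y}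
  mul_mem' hσ hτ x y := (hσ _ _).trans (hτ x y)
  one_mem' _ _ := rfl
  inv_mem' {σ} hσ x y := by
    rw [← hσ]
    exact congrArg₂ (ω · ·) (σ.apply_symm_apply x) (σ.apply_symm_apply y)

theorem mem_isometryGroup_iff {σ : V ≃ₗ[R] V} :
    σ ∈ isometryGroup ω ↔ ∀ x y, ω (σ x) (σ y) = ω x y :=
  Iff.rfl

/-- The symplectic transvection `x ↦ x + c ω(v, x) v` with direction `v` and parameter `c`. -/
def symplecticTransvection (hω : ω.IsAlt) (v : V) (c : R) : V ≃ₗ[R] V :=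
  LinearEquiv.transvection (f := c • ω v) (v := v) (by simp [hω v])

variable (hω : ω.IsAlt)

@[simp]
theorem symplecticTransvection_apply (v : V) (c : R) (x : V) :
    symplecticTransvection hω v c x = x + (c * ω v x) • v := by
  simp [symplecticTransvection, LinearMap.transvection.apply]

theorem symplecticTransvection_zero_left (c : R) : symplecticTransvection hω 0 c = 1 := by
  ext; simp

theorem symplecticTransvection_zero (v : V) : symplecticTransvection hω v 0 = 1 := by
  ext; simp

theorem symplecticTransvection_add (v : V) (c d : R) :
    symplecticTransvection hω v (c + d) =
      symplecticTransvection hω v c * symplecticTransvection hω v d := by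
  ext x
  simp only [symplecticTransvection_apply, LinearEquiv.mul_apply, map_add, map_smul, hω v]
  module

theorem symplecticTransvection_neg (v : V) (c : R) :
    symplecticTransvection hω v (-c) = (symplecticTransvection hω v c)⁻¹ := by
  rw [eq_inv_iff_mul_eq_one, ← symplecticTransvection_add, neg_add_cancel,
    symplecticTransvection_zero]

theorem symplecticTransvection_smul (a : R) (v : V) (c : R) :
    symplecticTransvection hω (a • v) c = symplecticTransvection hω v (a ^ 2 * c) := by
  ext x
  simp only [symplecticTransvection_apply, map_smul, LinearMap.smul_apply, smul_eq_mul,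
    add_right_inj]
  module

theorem symplecticTransvection_mem_isometryGroup (v : V) (c : R) :
    symplecticTransvection hω v c ∈ isometryGroup ω := by
  intro x y
  simp only [symplecticTransvection_apply, ← hω.neg x v, mul_neg, neg_smul, map_add, map_neg,
    map_smul, LinearMap.add_apply, smul_eq_mul, LinearMap.neg_apply, LinearMap.smul_apply, hω v,
    mul_zero]
  ring

theorem conj_symplecticTransvection {σ : V ≃ₗ[R] V} (hσ : σ ∈ isometryGroup ω) (v : V) (c : R) :
    σ * symplecticTransvection hω v c * σ⁻¹ = symplecticTransvection hω (σ v) c := by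
  rw [mul_inv_eq_iff_eq_mul]
  ext x
  simp [mem_isometryGroup_iff.mp hσ]

theorem fixedSubmodule_le_symplecticTransvection_mul {σ : V ≃ₗ[R] V}
    (hσ : σ ∈ isometryGroup ω) (z : V) (c : R) :
    σ.fixedSubmodule ≤ (symplecticTransvection hω (σ z - z) c * σ).fixedSubmodule := by
  intro x hx
  have hx' : σ x = x := hx
  have horth : ω (σ z - z) x = 0 := by
    have hzx := hσ z x
    rw [hx'] at hzx
    rw [map_sub, LinearMap.sub_apply, hzx, sub_self]
  simp [-map_sub, hx', horth]

end Isometry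

section Directions

variable {K V : Type*} [Field K] [AddCommGroup V] [Module K V] {ω : V →ₗ[K] V →ₗ[K] K}
  (hω : ω.IsAlt)

theorem exists_eq_symplecticTransvection (hsep : ω.SeparatingLeft) {τ : V ≃ₗ[K] V}
    (hτ : τ ∈ isometryGroup ω) (hτ' : τ ∈ LinearEquiv.dilatransvections K V) :
    ∃ v c, τ = symplecticTransvection hω v c := by
  obtain ⟨f, v, hfv⟩ := hτ'
  replace hfv (x : V) : τ x = x + f x • v := LinearMap.congr_fun hfv x
  obtain rfl | hv := eq_or_ne v 0
  · exact ⟨0, 0, by ext; simp [hfv]⟩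
  obtain ⟨y, hy⟩ : ∃ y, ω v y ≠ 0 := by
    contrapose! hv
    exact hsep v hv
  refine ⟨v, f y / ω v y, LinearEquiv.ext fun x ↦ ?_⟩
  have hxy := hτ x y
  simp only [hfv, map_add, map_smul, LinearMap.add_apply, LinearMap.smul_apply, smul_eq_mul, hω v,
    ← hω.neg v x] at hxy
  have hfx : f x = f y / ω v y * ω v x := by
    field_simp
    linear_combination hxy
  rw [symplecticTransvection_apply, hfv, hfx]

/-- The vectors `v` such that `H` contains every symplectic transvection with direction `v`;
it contains `0`. -/
def transvectionDirections (H : Subgroup (V ≃ₗ[K] V)) : Set V :=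
  {v | ∀ c, symplecticTransvection hω v c ∈ H}

variable {H : Subgroup (V ≃ₗ[K] V)}

theorem zero_mem_transvectionDirections : (0 : V) ∈ transvectionDirections hω H := fun c ↦ by
  rw [symplecticTransvection_zero_left]
  exact H.one_mem

theorem isTransvectionClosed_transvectionDirections :
    IsTransvectionClosed ω (transvectionDirections hω H) where
  smul_mem t v hv c := by
    rw [symplecticTransvection_smul]
    exact hv _
  add_smul_mem t u v hu hv c := by
    rw [← symplecticTransvection_apply hω,
      ← conj_symplecticTransvection hω (symplecticTransvection_mem_isometryGroup hω v t)]
    exact H.mul_mem (H.mul_mem (hv t) (hu c)) (H.inv_mem (hv t))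

theorem mem_transvectionDirections_of_prime_card (hK : (Nat.card K).Prime) {v : V} {c : K}
    (hc : c ≠ 0) (hvc : symplecticTransvection hω v c ∈ H) : v ∈ transvectionDirections hω H := by
  have : Fact (Nat.card K).Prime := ⟨hK⟩
  let A : AddSubgroup K :=
    { carrier := {d | symplecticTransvection hω v d ∈ H}
      zero_mem' := by simp [symplecticTransvection_zero, H.one_mem]
      add_mem' := fun ha hb ↦ by
        simpa [symplecticTransvection_add] using H.mul_mem ha hb
      neg_mem' := fun ha ↦ by simpa [symplecticTransvection_neg] using ha }
  have hA : A ≠ ⊥ := fun h ↦ hc <| by simpa [h] using (show c ∈ A from hvc)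
  intro d
  have hd : d ∈ A := by simp [A.eq_bot_or_eq_top_of_prime_card.resolve_left hA]
  exact hd

theorem ncard_transvections_le_ncard_transvectionDirections [Finite V]
    (hsep : ω.SeparatingLeft) (hK : (Nat.card K).Prime) (hH : H ≤ isometryGroup ω) :
    ((H : Set (V ≃ₗ[K] V)) ∩ (LinearEquiv.transvections K V \ {1})).ncard ≤
      (transvectionDirections hω H \ {0}).ncard := by
  set T := (H : Set (V ≃ₗ[K] V)) ∩ (LinearEquiv.transvections K V \ {1})
  have hfin : Finite K := (Nat.card_pos_iff.mp hK.pos).2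
  choose v c hvc using fun τ : T ↦ exists_eq_symplecticTransvection hω hsep (hH τ.2.1)
    (LinearEquiv.transvections_subset_dilatransvections τ.2.2.1)
  have hv (τ : T) : v τ ≠ 0 := fun h ↦ τ.2.2.2 <| by
    rw [hvc τ, h, symplecticTransvection_zero_left, Set.mem_singleton_iff]
  have hc (τ : T) : c τ ≠ 0 := fun h ↦ τ.2.2.2 <| by
    rw [hvc τ, h, symplecticTransvection_zero, Set.mem_singleton_iff]
  have hD (τ : T) : v τ ∈ transvectionDirections hω H :=
    mem_transvectionDirections_of_prime_card hω hK (hc τ) (hvc τ ▸ τ.2.1)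
  let F (p : Kˣ × T) : ↑(transvectionDirections hω H \ {0}) × Kˣ :=
    (⟨p.1 • v p.2, (isTransvectionClosed_transvectionDirections hω).smul_mem _ (hD p.2),
      by simpa [Units.smul_def] using hv p.2⟩, p.1⁻¹ ^ 2 * Units.mk0 (c p.2) (hc p.2))
  have hF (p : Kˣ × T) : (p.2 : V ≃ₗ[K] V) =
      symplecticTransvection hω ((F p).1 : V) ((F p).2 : K) := by
    have hp : (p.1 : K) ≠ 0 := p.1.ne_zero
    simp [F, Units.smul_def, symplecticTransvection_smul, hp, ← hvc]
  have hinj : Function.Injective F := by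
    rintro ⟨a, τ⟩ ⟨b, τ'⟩ h
    obtain rfl : τ = τ' := Subtype.ext <| by rw [hF (a, τ), hF (b, τ'), h]
    have hab : (a : K) • v τ = (b : K) • v τ := congrArg (fun q ↦ (q.1 : V)) h
    rw [Units.ext (smul_left_injective K (hv τ) hab)]
  have hcard := Nat.card_le_card_of_injective F hinj
  rw [Nat.card_prod, Nat.card_prod, mul_comm] at hcard
  exact Nat.le_of_mul_le_mul_right hcard Nat.card_pos

end Directions

section Generation

variable {K V : Type*} [Field K] [AddCommGroup V] [Module K V] {ω : V →ₗ[K] V →ₗ[K] K}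
  (hω : ω.IsAlt)

theorem exists_fixedSubmodule_lt_of_apply_ne_zero {σ : V ≃ₗ[K] V}
    (hσ : σ ∈ isometryGroup ω) {x : V} (hx : ω x (σ x) ≠ 0) :
    ∃ v c, σ.fixedSubmodule < (symplecticTransvection hω v c * σ).fixedSubmodule := by
  refine ⟨σ x - x, (ω x (σ x))⁻¹,
    (fixedSubmodule_le_symplecticTransvection_mul hω hσ x _).lt_of_not_ge fun h ↦ hx ?_⟩
  have hσx : σ x = x := h <| by simp [hω (σ x), hx]
  rw [hσx, hω x]

theorem exists_apply_symplecticTransvection_mul_ne_zero (hsep : ω.SeparatingLeft) {σ : V ≃ₗ[K] V}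
    (hσ : σ ∈ isometryGroup ω) (hσ₀ : ∀ x, ω x (σ x) = 0) {z : V} (hz : σ z ≠ z) :
    ∃ x, ω x ((symplecticTransvection hω (σ z - z) 1 * σ) x) ≠ 0 := by
  obtain ⟨x, hx⟩ : ∃ x, ω (σ z - z) x ≠ 0 := by
    contrapose! hz
    exact sub_eq_zero.mp (hsep _ hz)
  have hpolar : ω x (σ z) + ω z (σ x) = 0 := by
    simpa [hσ₀ x, hσ₀ z] using hσ₀ (x + z)
  have hσx : ω (σ z - z) (σ x) = ω x (σ z - z) := by
    rw [map_sub, map_sub, LinearMap.sub_apply, hσ, ← hω.neg x z]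
    linear_combination -hpolar
  refine ⟨x, ?_⟩
  simpa [-map_sub, hσ₀ x, hσx, hω.eq_iff] using hx

theorem exists_mem_fixedSubmodule_lt (hsep : ω.SeparatingLeft) {G : Subgroup (V ≃ₗ[K] V)}
    (hG : ∀ v c, symplecticTransvection hω v c ∈ G) {σ : V ≃ₗ[K] V} (hσ : σ ∈ isometryGroup ω)
    (hσ₁ : σ ≠ 1) : ∃ τ ∈ G, σ.fixedSubmodule < (τ * σ).fixedSubmodule := by
  by_cases hx : ∃ x, ω x (σ x) ≠ 0
  · obtain ⟨x, hx⟩ := hx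
    obtain ⟨v, c, hlt⟩ := exists_fixedSubmodule_lt_of_apply_ne_zero hω hσ hx
    exact ⟨_, hG v c, hlt⟩
  · obtain ⟨z, hz⟩ : ∃ z, σ z ≠ z := DFunLike.ne_iff.mp hσ₁
    obtain ⟨x, hx⟩ :=
      exists_apply_symplecticTransvection_mul_ne_zero hω hsep hσ (not_exists_not.mp hx) hz
    obtain ⟨v, c, hlt⟩ := exists_fixedSubmodule_lt_of_apply_ne_zero hω
      (mul_mem (symplecticTransvection_mem_isometryGroup hω _ _) hσ) hx
    rw [← mul_assoc] at hlt
    exact ⟨_, mul_mem (hG v c) (hG _ 1),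
      (fixedSubmodule_le_symplecticTransvection_mul hω hσ z 1).trans_lt hlt⟩

theorem closure_range_symplecticTransvection [FiniteDimensional K V] (hsep : ω.SeparatingLeft) :
    Subgroup.closure (Set.range fun p : V × K ↦ symplecticTransvection hω p.1 p.2) =
      isometryGroup ω := by
  set G := Subgroup.closure (Set.range fun p : V × K ↦ symplecticTransvection hω p.1 p.2)
  have hG (v : V) (c : K) : symplecticTransvection hω v c ∈ G :=
    Subgroup.subset_closure ⟨(v, c), rfl⟩
  have hle : G ≤ isometryGroup ω := by
    rw [Subgroup.closure_le]
    rintro _ ⟨p, rfl⟩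
    exact symplecticTransvection_mem_isometryGroup hω p.1 p.2
  refine le_antisymm hle fun σ hσ ↦ ?_
  induction hW : σ.fixedSubmodule using WellFoundedGT.induction generalizing σ with
  | ind W ih =>
    obtain rfl | hσ₁ := eq_or_ne σ 1
    · exact one_mem _
    · obtain ⟨τ, hτ, hlt⟩ := exists_mem_fixedSubmodule_lt hω hsep hG hσ hσ₁
      have hτσ := ih _ (hW ▸ hlt) _ (mul_mem (hle hτ) hσ) rfl
      exact (Subgroup.mul_mem_cancel_left _ hτ).mp hτσ

end Generation

theorem subgroup_eq_top_of_many_transvections_general {K V : Type*} [Field K] [AddCommGroup V]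
    [Module K V] [Finite V] (hK : (Nat.card K).Prime) (hK₃ : 3 ≤ Nat.card K)
    {ω : V →ₗ[K] V →ₗ[K] K} (hω : ω.IsAlt) (hsep : ω.SeparatingLeft) (H : Subgroup (V ≃ₗ[K] V))
    (hH : H ≤ isometryGroup ω)
    (hcard : Nat.card V ≤
      Nat.card K * ((H : Set (V ≃ₗ[K] V)) ∩ (LinearEquiv.transvections K V \ {1})).ncard) :
    H = isometryGroup ω := by
  have : Finite K := (Nat.card_pos_iff.mp hK.pos).2
  have hlt : (transvectionDirections hω H \ {0}).ncard < (transvectionDirections hω H).ncard :=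
    Set.ncard_sdiff_singleton_lt_of_mem (zero_mem_transvectionDirections hω)
  have hcard' : Nat.card V < Nat.card K * (transvectionDirections hω H).ncard :=
    hcard.trans_lt <| Nat.mul_lt_mul_of_pos_left
      ((ncard_transvections_le_ncard_transvectionDirections hω hsep hK hH).trans_lt hlt) hK.pos
  have huniv : transvectionDirections hω H = Set.univ :=
    (isTransvectionClosed_transvectionDirections hω).eq_univ hω hsep
      (by simpa [ENat.card_eq_coe_natCard] using hK₃) hcard'
  refine le_antisymm hH ?_
  rw [← closure_range_symplecticTransvection hω hsep, Subgroup.closure_le]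
  rintro _ ⟨⟨v, c⟩, rfl⟩
  exact Set.eq_univ_iff_forall.mp huniv v c

section StandardForm

open Matrix

variable (l R : Type*) [Fintype l] [DecidableEq l] [CommRing R]

/-- The alternating form on `R ^ (l ⊕ l)` with matrix `Matrix.J l R`, whose isometries are the
elements of `Matrix.symplecticGroup l R`. -/
noncomputable def standardSymplecticForm : (l ⊕ l → R) →ₗ[R] (l ⊕ l → R) →ₗ[R] R :=
  toLinearMap₂' R (J l R)

theorem standardSymplecticForm_isAlt : (standardSymplecticForm l R).IsAlt := by
  intro x
  simp [standardSymplecticForm, toLinearMap₂'_apply', J, fromBlocks_mulVec, dotProduct,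
    mul_comm (x (Sum.inl _)), neg_mulVec]

theorem standardSymplecticForm_separatingLeft : (standardSymplecticForm l R).SeparatingLeft :=
  (Nondegenerate.of_det_mem_nonZeroDivisors
    (isUnit_det_J l R).mem_nonZeroDivisors).separatingLeft.toLinearMap₂'

variable {l R}

theorem mem_symplecticGroup_iff {A : Matrix (l ⊕ l) (l ⊕ l) R} :
    A ∈ symplecticGroup l R ↔ ∀ x y,
      standardSymplecticForm l R (A *ᵥ x) (A *ᵥ y) = standardSymplecticForm l R x y := by
  rw [SymplecticGroup.mem_iff', ← (toLinearMap₂' R (S₁ := R) (S₂ := R) (N₂ := R)).injective.eq_iff,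
    ← toLinearMap₂'_comp, LinearMap.ext_iff₂]
  rfl

variable (l R) in
/-- The action of the matrix group `Matrix.symplecticGroup l R` on column vectors. -/
noncomputable def symplecticGroupToLinearEquiv :
    symplecticGroup l R →* ((l ⊕ l → R) ≃ₗ[R] (l ⊕ l → R)) :=
  (LinearMap.GeneralLinearGroup.generalLinearEquiv R (l ⊕ l → R)).toMonoidHom.comp
    (MonoidHom.toHomUnits
      ((toLinAlgEquiv' (R := R)).toMonoidHom.comp (symplecticGroup l R).subtype))

theorem symplecticGroupToLinearEquiv_toLinearMap (A : symplecticGroup l R) :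
    (symplecticGroupToLinearEquiv l R A : (l ⊕ l → R) →ₗ[R] (l ⊕ l → R)) = toLin' A.1 :=
  rfl

theorem symplecticGroupToLinearEquiv_apply (A : symplecticGroup l R) (x : l ⊕ l → R) :
    symplecticGroupToLinearEquiv l R A x = A.1 *ᵥ x :=
  rfl

theorem symplecticGroupToLinearEquiv_injective :
    Function.Injective (symplecticGroupToLinearEquiv l R) := fun _ _ h ↦
  Subtype.ext <| toLin'.injective <| congrArg LinearEquiv.toLinearMap h

theorem range_symplecticGroupToLinearEquiv :
    (symplecticGroupToLinearEquiv l R).range = isometryGroup (standardSymplecticForm l R) := by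
  ext σ
  constructor
  · rintro ⟨A, rfl⟩
    exact mem_symplecticGroup_iff.mp A.2
  · intro hσ
    have hmem : LinearMap.toMatrix' (σ : (l ⊕ l → R) →ₗ[R] (l ⊕ l → R)) ∈ symplecticGroup l R := by
      simpa [mem_symplecticGroup_iff, mem_isometryGroup_iff] using hσ
    exact ⟨⟨_, hmem⟩, by ext; simp [symplecticGroupToLinearEquiv_apply]⟩

theorem map_symplecticGroupToLinearEquiv_eq_isometryGroup_iff
    {H : Subgroup (symplecticGroup l R)} :
    H.map (symplecticGroupToLinearEquiv l R) = isometryGroup (standardSymplecticForm l R) ↔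
      H = ⊤ := by
  rw [← range_symplecticGroupToLinearEquiv, MonoidHom.range_eq_map]
  exact (Subgroup.map_injective symplecticGroupToLinearEquiv_injective).eq_iff

theorem symplecticGroupToLinearEquiv_mem_transvections {K : Type*} [Field K]
    {A : symplecticGroup l K} (hA : (A.1 - 1).rank ≤ 1) :
    symplecticGroupToLinearEquiv l K A ∈ LinearEquiv.transvections K (l ⊕ l → K) := by
  have hdil : symplecticGroupToLinearEquiv l K A ∈
      LinearEquiv.dilatransvections K (l ⊕ l → K) := by
    rw [LinearEquiv.mem_dilatransvections_iff_finrank, symplecticGroupToLinearEquiv_toLinearMap,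
      ← toLin'_one, ← map_sub]
    exact hA
  obtain ⟨v, c, h⟩ := exists_eq_symplecticTransvection (standardSymplecticForm_isAlt l K)
    (standardSymplecticForm_separatingLeft l K)
    (range_symplecticGroupToLinearEquiv.le ⟨A, rfl⟩) hdil
  rw [h]
  exact LinearEquiv.transvection_mem_transvections

theorem ncard_isSymplecticTransvection_le {g ℓ : ℕ} [Fact ℓ.Prime]
    (H : Subgroup (symplecticGroup (Fin g) (ZMod ℓ))) :
    {τ | τ ∈ H ∧ IsSymplecticTransvection τ}.ncard ≤
      ((H.map (symplecticGroupToLinearEquiv (Fin g) (ZMod ℓ)) : Set _) ∩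
        (LinearEquiv.transvections (ZMod ℓ) (Fin g ⊕ Fin g → ZMod ℓ) \ {1})).ncard := by
  have hinj := symplecticGroupToLinearEquiv_injective (l := Fin g) (R := ZMod ℓ)
  rw [Subgroup.coe_map, ← Set.ncard_image_of_injective _ hinj]
  refine Set.ncard_le_ncard ?_ (((Set.toFinite _).image _).inter_of_left _)
  rintro _ ⟨τ, ⟨hτH, hτ₁, hτ⟩, rfl⟩
  exact ⟨⟨τ, hτH, rfl⟩, symplecticGroupToLinearEquiv_mem_transvections hτ.le,
    (map_ne_one_iff _ hinj).mpr hτ₁⟩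

end StandardForm

/-- For `ℓ ≥ 3` a prime, any subgroup of `Sp(2g, 𝔽_ℓ)` containing at least `ℓ^(2g-1)`
transvections is the whole of `Sp(2g, 𝔽_ℓ)`. -/
theorem subgroup_eq_top_of_many_transvections (g ℓ : ℕ) (hℓ : ℓ.Prime) (hℓ3 : 3 ≤ ℓ)
    (H : Subgroup (Matrix.symplecticGroup (Fin g) (ZMod ℓ)))
    (h : ℓ ^ (2 * g - 1) ≤
      Nat.card {τ : Matrix.symplecticGroup (Fin g) (ZMod ℓ) //
        τ ∈ H ∧ IsSymplecticTransvection τ}) :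
    H = ⊤ := by
  have : Fact ℓ.Prime := ⟨hℓ⟩
  rw [← map_symplecticGroupToLinearEquiv_eq_isometryGroup_iff]
  refine subgroup_eq_top_of_many_transvections_general (by simpa using hℓ) (by simpa using hℓ3)
    (standardSymplecticForm_isAlt _ _) (standardSymplecticForm_separatingLeft _ _) _
    ((Subgroup.map_le_range _ H).trans_eq range_symplecticGroupToLinearEquiv) ?_
  calc Nat.card (Fin g ⊕ Fin g → ZMod ℓ) = ℓ ^ (2 * g) := by simp [two_mul]
    _ ≤ ℓ ^ (2 * g - 1 + 1) := Nat.pow_le_pow_right hℓ.pos (by lia)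
    _ = Nat.card (ZMod ℓ) * ℓ ^ (2 * g - 1) := by rw [Nat.card_zmod, pow_succ']
    _ ≤ _ := Nat.mul_le_mul_left _ (h.trans (ncard_isSymplecticTransvection_le H))
end

section
/- For a fixed number field k, define β_k(x; δ) = min{t ≥ 2 : Σ_{N𝔭 ≤ t} (N𝔭)^{−1+δ} ≥ x}. Then for 0 < δ < 1 and x ≥ 2, β_k(x; δ) ≪ (2x log x)^{1/δ}, where the implied constant depends only on k. -/
open NumberField IsDedekindDomain

noncomputable section

/-- `β_k(x; δ) = min{t ≥ 2 : Σ_{N𝔭 ≤ t} (N𝔭)^{−1+δ} ≥ x}`, the sum running over the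
prime ideals `𝔭` of `ℤ_k` of norm at most `t`. -/
def betaPIT (k : Type*) [Field k] [NumberField k] (x δ : ℝ) : ℝ :=
  sInf {t : ℝ | 2 ≤ t ∧
    x ≤ ∑ᶠ v : HeightOneSpectrum (𝓞 k),
      if (Nat.card (𝓞 k ⧸ v.asIdeal) : ℝ) ≤ t
        then (Nat.card (𝓞 k ⧸ v.asIdeal) : ℝ) ^ (-1 + δ) else 0}

/-!
Mertens' first theorem `∑_{N𝔭 ≤ t} log N𝔭 / N𝔭 = log t + O(1)` takes the place of the prime ideal
theorem. As Mertens obtained it from the factorization of `n!`, it comes here from the average of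
`log |N(α)|` over the integers `α` in a cube of side `N ≍ t^{1/d}`, placed where `|N(α)| ≍ N^d`.
An ideal `I` contains a nonzero element with coordinates `≪ N(I)^{1/d}`, so every integer is
congruent modulo `I` to one of that size, and the proportion of elements of `I` in the cube is
`1 / N(I) + O(N(I)^{-1 + 1/d} / N)`. Chebyshev's bound controls the sum of these errors.

A window `s < N𝔭 ≤ t` thus contributes at least `(log (t / s) - O(1)) s^δ / log t` to the sum
defining `β_k`. In terms of `y = t^δ` the error `O(1)` becomes `O(δ)`: for small `δ` it is
negligible against windows of constant ratio in `y`, while for `δ` bounded below a single window of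
large constant ratio in `t` suffices, at the cost of a constant factor in `t`.
-/

section LatticeBox

open Finset

variable {ι M : Type*} [AddCommGroup M] (b : Module.Basis ι ℤ M)

/-- The elements of `M` whose coordinates in the basis `b` are at most `r` in absolute value
represent all classes modulo `Λ`. -/
def IsCoveringRadius (Λ : AddSubgroup M) (r : ℕ) : Prop :=
  ∀ x, ∃ ρ, x - ρ ∈ Λ ∧ ∀ i, |b.repr ρ i| ≤ r

variable {b}

namespace IsCoveringRadius

variable {Λ Λ' : AddSubgroup M} {r s : ℕ}

lemma mono (h : IsCoveringRadius b Λ r) (hΛ : Λ ≤ Λ') (hr : r ≤ s) : IsCoveringRadius b Λ' s :=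
  fun x ↦ (h x).imp fun _ hρ ↦
    ⟨hΛ hρ.1, fun i ↦ (hρ.2 i).trans (by exact_mod_cast hr)⟩

lemma exists_section (h : IsCoveringRadius b Λ r) :
    ∃ ρ : M ⧸ Λ → M, (∀ c, (ρ c : M ⧸ Λ) = c) ∧ ∀ c i, |b.repr (ρ c) i| ≤ r := by
  have hρ (c : M ⧸ Λ) : ∃ ρ : M, (ρ : M ⧸ Λ) = c ∧ ∀ i, |b.repr ρ i| ≤ r := by
    obtain ⟨x, rfl⟩ := QuotientAddGroup.mk_surjective c
    exact (h x).imp fun ρ hρ ↦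
      ⟨QuotientAddGroup.eq.mpr (by simpa only [neg_add_eq_sub] using hρ.1), hρ.2⟩
  choose ρ hmk hle using hρ
  exact ⟨ρ, hmk, hle⟩

end IsCoveringRadius

variable [Fintype ι]

variable (b) in
open Classical in
/-- The elements of the free abelian group `M` whose coordinates in the basis `b` lie in the
half-open cube `∏ i, [u i, u i + N)`. -/
def latticeBox (u : ι → ℤ) (N : ℕ) : Finset M :=
  (Fintype.piFinset fun i ↦ Ico (u i) (u i + N)).map b.equivFun.symm.toEquiv.toEmbedding

lemma mem_latticeBox {u : ι → ℤ} {N : ℕ} {x : M} :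
    x ∈ latticeBox b u N ↔ ∀ i, b.repr x i ∈ Set.Ico (u i) (u i + N) := by
  simp [latticeBox]

@[simp]
lemma card_latticeBox (u : ι → ℤ) (N : ℕ) : #(latticeBox b u N) = N ^ Fintype.card ι := by
  simp [latticeBox]

/-- Pigeonhole principle on the cube `[0, m] ^ ι`. -/
lemma exists_ne_zero_mem_forall_abs_repr_le (Λ : AddSubgroup M) [Λ.FiniteIndex] {m : ℕ}
    (hm : Λ.index < (m + 1) ^ Fintype.card ι) :
    ∃ α ∈ Λ, α ≠ 0 ∧ ∀ i, |b.repr α i| ≤ m := by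
  classical
  have := Fintype.ofFinite (M ⧸ Λ)
  have hcard : #(univ : Finset (M ⧸ Λ)) < #(latticeBox b 0 (m + 1)) := by
    rwa [card_latticeBox, card_univ, ← Nat.card_eq_fintype_card, ← Λ.index_eq_card]
  obtain ⟨x, hx, y, hy, hxy, heq⟩ := exists_ne_map_eq_of_card_lt_of_maps_to hcard
    (f := ((↑) : M → M ⧸ Λ)) fun _ _ ↦ by simp
  refine ⟨-x + y, QuotientAddGroup.eq.mp heq, by rwa [Ne, neg_add_eq_zero], fun i ↦ ?_⟩
  have hxi := mem_latticeBox.mp hx i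
  have hyi := mem_latticeBox.mp hy i
  simp only [Pi.zero_apply, Set.mem_Ico, Nat.cast_add, Nat.cast_one] at hxi hyi
  simp only [map_add, map_neg, Finsupp.add_apply, Finsupp.neg_apply, abs_le]
  omega

namespace IsCoveringRadius

variable {Λ : AddSubgroup M} {r : ℕ} [DecidablePred (· ∈ Λ)]

/-- Translating the points of `Λ` in a cube by representatives of `M ⧸ Λ` gives distinct points of
a slightly larger cube. -/
lemma index_mul_card_le (h : IsCoveringRadius b Λ r) (u : ι → ℤ) (N : ℕ) :
    Λ.index * #{x ∈ latticeBox b u N | x ∈ Λ} ≤ (N + 2 * r) ^ Fintype.card ι := by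
  obtain ⟨ρ, hmk, hle⟩ := h.exists_section
  rw [Λ.index_eq_card, ← Nat.card_eq_finsetCard, ← Nat.card_prod,
    ← card_latticeBox (b := b) (fun i ↦ u i - r), ← Nat.card_eq_finsetCard]
  have hmem (p : (M ⧸ Λ) × {x // x ∈ ({x ∈ latticeBox b u N | x ∈ Λ} : Finset M)}) :
      p.2 + ρ p.1 ∈ latticeBox b (fun i ↦ u i - r) (N + 2 * r) := by
    refine mem_latticeBox.mpr fun i ↦ ?_
    have hx := mem_latticeBox.mp (mem_filter.mp p.2.2).1 i
    have hρ := abs_le.mp (hle p.1 i)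
    simp only [map_add, Finsupp.add_apply, Set.mem_Ico] at hx ⊢
    push_cast
    omega
  refine Nat.card_le_card_of_injective (fun p ↦ ⟨_, hmem p⟩) ?_
  rintro ⟨c, x, hx⟩ ⟨c', x', hx'⟩ heq
  replace heq : x + ρ c = x' + ρ c' := congrArg Subtype.val heq
  have hc : c = c' := by
    rw [← hmk c, ← hmk c', QuotientAddGroup.eq]
    convert Λ.sub_mem (mem_filter.mp hx).2 (mem_filter.mp hx').2 using 1
    rw [neg_add_eq_sub, sub_eq_sub_iff_add_eq_add, heq, add_comm]
  subst hc
  simpa using heq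

lemma pow_le_index_mul_card [Λ.FiniteIndex] (h : IsCoveringRadius b Λ r) (u : ι → ℤ) (N : ℕ) :
    (N - 2 * r) ^ Fintype.card ι ≤ Λ.index * #{x ∈ latticeBox b u N | x ∈ Λ} := by
  obtain ⟨ρ, hmk, hle⟩ := h.exists_section
  rw [Λ.index_eq_card, ← Nat.card_eq_finsetCard, ← Nat.card_prod,
    ← card_latticeBox (b := b) (fun i ↦ u i + r), ← Nat.card_eq_finsetCard]
  have hmem (y : {y // y ∈ latticeBox b (fun i ↦ u i + r) (N - 2 * r)}) :
      (y : M) - ρ (y : M) ∈ ({x ∈ latticeBox b u N | x ∈ Λ} : Finset M) := by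
    refine mem_filter.mpr ⟨mem_latticeBox.mpr fun i ↦ ?_, ?_⟩
    · have hy := mem_latticeBox.mp y.2 i
      have hρ := abs_le.mp (hle (y : M) i)
      simp only [map_sub, Finsupp.sub_apply, Set.mem_Ico] at hy ⊢
      omega
    · rw [← neg_add_eq_sub, ← QuotientAddGroup.eq]
      exact hmk _
  refine Nat.card_le_card_of_injective (fun y ↦ (((y : M) : M ⧸ Λ), ⟨_, hmem y⟩)) ?_
  intro y y' heq
  simp only [Prod.mk.injEq, Subtype.mk.injEq] at heq
  rw [heq.1, sub_left_inj] at heq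
  exact Subtype.ext heq.2

lemma abs_index_mul_card_sub_pow_le [Λ.FiniteIndex] (h : IsCoveringRadius b Λ r)
    (u : ι → ℤ) (N : ℕ) :
    |(Λ.index * #{x ∈ latticeBox b u N | x ∈ Λ} - N ^ Fintype.card ι : ℝ)| ≤
      2 * r * Fintype.card ι * (N + 2 * r) ^ (Fintype.card ι - 1) := by
  have hpow {a c : ℕ} (hac : a ≤ c) (hc : c ≤ N + 2 * r) (hsub : c ≤ a + 2 * r) :
      ((c ^ Fintype.card ι - a ^ Fintype.card ι : ℝ)) ≤
        2 * r * Fintype.card ι * (N + 2 * r) ^ (Fintype.card ι - 1) := by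
    have hac' : (a : ℝ) ≤ c := by exact_mod_cast hac
    calc ((c : ℝ) ^ Fintype.card ι - a ^ Fintype.card ι)
        ≤ |(c : ℝ) - a| * Fintype.card ι * max |(c : ℝ)| |(a : ℝ)| ^ (Fintype.card ι - 1) :=
          (le_abs_self _).trans (abs_pow_sub_pow_le _ _ _)
      _ ≤ 2 * r * Fintype.card ι * (N + 2 * r) ^ (Fintype.card ι - 1) := by
          rw [Nat.abs_cast, Nat.abs_cast, max_eq_left hac', abs_of_nonneg (sub_nonneg.mpr hac')]
          gcongr
          · rw [sub_le_iff_le_add']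
            exact_mod_cast hsub
          · exact_mod_cast hc
  have hupper : (Λ.index * #{x ∈ latticeBox b u N | x ∈ Λ} : ℝ) ≤
      ((N + 2 * r : ℕ) : ℝ) ^ Fintype.card ι := by exact_mod_cast h.index_mul_card_le u N
  have hlower : ((N - 2 * r : ℕ) : ℝ) ^ Fintype.card ι ≤
      Λ.index * #{x ∈ latticeBox b u N | x ∈ Λ} := by exact_mod_cast h.pow_le_index_mul_card u N
  rw [abs_le]
  constructor
  · linarith [hpow (a := N - 2 * r) (c := N) (by omega) (by omega) (by omega)]
  · linarith [hpow (a := N) (c := N + 2 * r) (by omega) le_rfl (by omega)]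

end IsCoveringRadius

end LatticeBox

section CoveringRadius

open Finset

variable {ι R : Type*} [CommRing R]

lemma exists_abs_repr_mul_le [Finite ι] (b : Module.Basis ι ℤ R) :
    ∃ D : ℕ, ∀ (x y : R) (m n : ℕ), (∀ i, |b.repr x i| ≤ m) → (∀ i, |b.repr y i| ≤ n) →
      ∀ i, |b.repr (x * y) i| ≤ D * m * n := by
  have := Fintype.ofFinite ι
  refine ⟨∑ i, ∑ l, ∑ j, (b.repr (b l * b j) i).natAbs, fun x y m n hx hy i ↦ ?_⟩
  have hxy : b.repr (x * y) i =
      ∑ l, ∑ j, b.repr x l * b.repr y j * b.repr (b l * b j) i := by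
    conv_lhs => rw [← b.sum_repr x, ← b.sum_repr y, sum_mul_sum]
    simp only [map_sum, smul_mul_smul_comm, map_zsmul, Finsupp.finsetSum_apply, Finsupp.smul_apply,
      smul_eq_mul]
  calc |b.repr (x * y) i|
      ≤ ∑ l, ∑ j, |b.repr x l * b.repr y j * b.repr (b l * b j) i| := by
        rw [hxy]
        exact (abs_sum_le_sum_abs _ _).trans (sum_le_sum fun l _ ↦ abs_sum_le_sum_abs _ _)
    _ ≤ ∑ l, ∑ j, m * n * |b.repr (b l * b j) i| := by
        simp only [abs_mul]
        gcongr with l _ j _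
        exacts [hx l, hy j]
    _ = m * n * ∑ l, ∑ j, |b.repr (b l * b j) i| := by simp only [mul_sum]
    _ ≤ m * n * ∑ i, ∑ l, ∑ j, |b.repr (b l * b j) i| := by
        refine mul_le_mul_of_nonneg_left ?_ (by positivity)
        exact single_le_sum (f := fun i ↦ ∑ l, ∑ j, |b.repr (b l * b j) i|)
          (fun i _ ↦ by positivity) (mem_univ i)
    _ = _ := by push_cast; ring

/-- Reducing the coordinates of `x α'` modulo `n = α α'` shows that every `x` is congruent to
`α ρ / n` modulo `α`, for some `ρ` with coordinates in `[0, n)`. -/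
lemma exists_isCoveringRadius_span_singleton [Finite ι] (b : Module.Basis ι ℤ R) :
    ∃ D : ℕ, ∀ (α : R) (m n : ℕ), (∀ i, |b.repr α i| ≤ m) → n ≠ 0 → α ∣ n →
      IsCoveringRadius b (Ideal.span {α}).toAddSubgroup (D * m) := by
  have := Fintype.ofFinite ι
  obtain ⟨D, hD⟩ := exists_abs_repr_mul_le b
  refine ⟨D, fun α m n hα hn ⟨α', hα'⟩ x ↦ ?_⟩
  have hn' : (0 : ℤ) < n := by exact_mod_cast hn.bot_lt
  set γ := ∑ i, (b.repr (x * α') i / n) • b i with hγ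
  set ρ := ∑ i, (b.repr (x * α') i % n) • b i with hρ
  have hdiv : x * α' = n * γ + ρ := by
    conv_lhs => rw [← b.sum_repr (x * α')]
    rw [hγ, hρ, mul_sum, ← sum_add_distrib]
    refine sum_congr rfl fun i _ ↦ ?_
    conv_lhs => rw [← Int.mul_ediv_add_emod (b.repr (x * α') i) n]
    rw [add_smul, mul_smul, natCast_zsmul, nsmul_eq_mul]
  have hρ_le (i : ι) : |b.repr ρ i| ≤ n := by
    rw [hρ, b.repr_sum_self, abs_of_nonneg (Int.emod_nonneg _ hn'.ne')]
    exact (Int.emod_lt_of_pos _ hn').le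
  have hmul : (n : ℤ) • (x - α * γ) = α * ρ := by
    rw [natCast_zsmul, nsmul_eq_mul]
    linear_combination x * hα' + α * hdiv
  refine ⟨x - α * γ, ?_, fun i ↦ le_of_mul_le_mul_left ?_ hn'⟩
  · simpa using Ideal.mul_mem_right γ _ (Ideal.mem_span_singleton_self α)
  · calc n * |b.repr (x - α * γ) i| = |b.repr (α * ρ) i| := by
          rw [← hmul, map_zsmul, Finsupp.smul_apply, smul_eq_mul, abs_mul, Nat.abs_cast]
      _ ≤ D * m * n := hD α ρ m n hα hρ_le i
      _ = n * ↑(D * m) := by push_cast; ring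

lemma exists_isCoveringRadius_absNorm [Fintype ι] [IsDedekindDomain R] [Module.Free ℤ R]
    (b : Module.Basis ι ℤ R) :
    ∃ D : ℕ, ∀ I : Ideal R, I ≠ ⊥ → IsCoveringRadius b I.toAddSubgroup
      (D * ⌊(Ideal.absNorm I : ℝ) ^ (Fintype.card ι : ℝ)⁻¹⌋₊) := by
  obtain ⟨D, hD⟩ := exists_isCoveringRadius_span_singleton b
  refine ⟨D, fun I hI ↦ ?_⟩
  have := Module.Finite.of_basis b
  have := Ideal.finiteIndex hI
  have : Nonempty ι := b.index_nonempty
  set m := ⌊(Ideal.absNorm I : ℝ) ^ (Fintype.card ι : ℝ)⁻¹⌋₊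
  have hm : I.toAddSubgroup.index < (m + 1) ^ Fintype.card ι := by
    rw [← Ideal.absNorm_eq_index, ← Nat.cast_lt (α := ℝ), Nat.cast_pow, ← Real.rpow_natCast,
      ← Real.rpow_inv_lt_iff_of_pos (by positivity) (by positivity) (by positivity)]
    exact_mod_cast Nat.lt_floor_add_one _
  obtain ⟨α, hαI, hα0, hα⟩ := exists_ne_zero_mem_forall_abs_repr_le _ hm
  refine (hD α m (Ideal.absNorm (Ideal.span {α})) hα ?_ ?_).mono ?_ le_rfl
  · rwa [Ne, Ideal.absNorm_eq_zero_iff, Ideal.span_singleton_eq_bot]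
  · exact Ideal.mem_span_singleton.mp (Ideal.absNorm_mem _)
  · exact (Ideal.span_singleton_le_iff_mem I).mpr hαI

end CoveringRadius

section BoxDensity

open Finset

variable {ι R : Type*} [Fintype ι] [CommRing R] (b : Module.Basis ι ℤ R)

open Classical in
/-- The proportion of elements of the ideal `I` among the lattice points of the cube
`latticeBox b u N`. -/
def boxDensity (I : Ideal R) (u : ι → ℤ) (N : ℕ) : ℝ :=
  #{x ∈ latticeBox b u N | x ∈ I} / (N : ℝ) ^ Fintype.card ι

open Classical in
lemma sum_mul_boxDensity {α : Type*} (s : Finset α) (w : α → ℝ) (I : α → Ideal R)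
    (u : ι → ℤ) (N : ℕ) :
    ∑ a ∈ s, w a * boxDensity b (I a) u N =
      (∑ x ∈ latticeBox b u N, ∑ a ∈ s with x ∈ I a, w a) / (N : ℝ) ^ Fintype.card ι := by
  simp only [boxDensity, mul_div_assoc', ← sum_div, sum_filter]
  rw [sum_comm]
  simp only [← sum_filter, sum_const, nsmul_eq_mul, mul_comm]

open Classical in
lemma sum_mul_boxDensity_le {α : Type*} {s : Finset α} {w : α → ℝ} {I : α → Ideal R}
    {u : ι → ℤ} {N : ℕ} (hN : N ≠ 0) {c : ℝ}
    (h : ∀ x ∈ latticeBox b u N, ∑ a ∈ s with x ∈ I a, w a ≤ c) :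
    ∑ a ∈ s, w a * boxDensity b (I a) u N ≤ c := by
  rw [sum_mul_boxDensity, div_le_iff₀ (by positivity)]
  simpa [card_latticeBox, mul_comm] using sum_le_card_nsmul _ _ c h

open Classical in
lemma le_sum_mul_boxDensity {α : Type*} {s : Finset α} {w : α → ℝ} {I : α → Ideal R}
    {u : ι → ℤ} {N : ℕ} (hN : N ≠ 0) {c : ℝ}
    (h : ∀ x ∈ latticeBox b u N, c ≤ ∑ a ∈ s with x ∈ I a, w a) :
    c ≤ ∑ a ∈ s, w a * boxDensity b (I a) u N := by
  rw [sum_mul_boxDensity, le_div_iff₀ (by positivity)]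
  simpa [card_latticeBox, mul_comm] using card_nsmul_le_sum _ _ c h

variable [IsDedekindDomain R] [Module.Free ℤ R]

lemma exists_abs_boxDensity_sub_le (K : ℕ) :
    ∃ C : ℝ, 0 ≤ C ∧ ∀ (I : Ideal R) (u : ι → ℤ) (N : ℕ), I ≠ ⊥ → N ≠ 0 →
      Ideal.absNorm I ≤ (K * N) ^ Fintype.card ι →
      |boxDensity b I u N - (Ideal.absNorm I : ℝ)⁻¹| ≤
        C / N * (Ideal.absNorm I : ℝ) ^ (-1 + (Fintype.card ι : ℝ)⁻¹) := by
  classical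
  obtain ⟨D, hD⟩ := exists_isCoveringRadius_absNorm b
  have : Nonempty ι := b.index_nonempty
  set d := Fintype.card ι with hd
  have hd0 : d ≠ 0 := Fintype.card_ne_zero
  refine ⟨2 * D * d * (1 + 2 * (D * K)) ^ (d - 1), by positivity, fun I u N hI hN hIN ↦ ?_⟩
  have := Module.Finite.of_basis b
  have := Ideal.finiteIndex hI
  have hq0 : (0 : ℝ) < Ideal.absNorm I := by
    exact_mod_cast Nat.pos_of_ne_zero (Ideal.absNorm_eq_zero_iff.not.mpr hI)
  have hqK : (Ideal.absNorm I : ℝ) ^ (d : ℝ)⁻¹ ≤ K * N := by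
    rw [Real.rpow_inv_le_iff_of_pos hq0.le (by positivity) (by positivity), Real.rpow_natCast]
    exact_mod_cast hIN
  set q : ℝ := (Ideal.absNorm I : ℝ) with hq
  have hfloor : (⌊q ^ (d : ℝ)⁻¹⌋₊ : ℝ) ≤ q ^ (d : ℝ)⁻¹ := Nat.floor_le (by positivity)
  have hcount := (hD I hI).abs_index_mul_card_sub_pow_le u N
  rw [← Ideal.absNorm_eq_index, ← hq, ← hd] at hcount
  simp only [Nat.cast_mul, Submodule.mem_toAddSubgroup] at hcount
  calc |boxDensity b I u N - q⁻¹|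
      = |q * #{x ∈ latticeBox b u N | x ∈ I} - (N : ℝ) ^ d| / (q * (N : ℝ) ^ d) := by
        rw [show boxDensity b I u N - q⁻¹ =
            (q * #{x ∈ latticeBox b u N | x ∈ I} - (N : ℝ) ^ d) / (q * (N : ℝ) ^ d) by
          rw [boxDensity, ← hd]; field_simp, abs_div]
        rw [abs_of_pos (a := q * (N : ℝ) ^ d) (by positivity)]
    _ ≤ 2 * (D * q ^ (d : ℝ)⁻¹) * d * (N + 2 * (D * (K * N))) ^ (d - 1) / (q * (N : ℝ) ^ d) := by
        gcongr
        refine hcount.trans ?_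
        gcongr
        exact hfloor.trans hqK
    _ = 2 * D * d * (1 + 2 * (D * K)) ^ (d - 1) / N * q ^ (-1 + (d : ℝ)⁻¹) := by
        rw [Real.rpow_add hq0, Real.rpow_neg_one, ← mul_pow_sub_one hd0 (N : ℝ),
          show (N + 2 * (D * (K * N)) : ℝ) = N * (1 + 2 * (D * K)) by ring, mul_pow]
        field_simp

lemma exists_boxDensity_le (K : ℕ) :
    ∃ G : ℝ, 0 ≤ G ∧ ∀ (I : Ideal R) (u : ι → ℤ) (N : ℕ), I ≠ ⊥ → N ≠ 0 →
      Ideal.absNorm I ≤ (K * N) ^ Fintype.card ι →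
      boxDensity b I u N ≤ G * (Ideal.absNorm I : ℝ)⁻¹ := by
  obtain ⟨C, hC0, hC⟩ := exists_abs_boxDensity_sub_le b K
  have : Nonempty ι := b.index_nonempty
  refine ⟨1 + C * K, by positivity, fun I u N hI hN hIN ↦ ?_⟩
  have := Module.Finite.of_basis b
  have hq0 : (0 : ℝ) < Ideal.absNorm I := by
    exact_mod_cast Nat.pos_of_ne_zero (Ideal.absNorm_eq_zero_iff.not.mpr hI)
  have hqK : (Ideal.absNorm I : ℝ) ^ (Fintype.card ι : ℝ)⁻¹ ≤ K * N := by
    rw [Real.rpow_inv_le_iff_of_pos hq0.le (by positivity) (by positivity), Real.rpow_natCast]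
    exact_mod_cast hIN
  set q : ℝ := (Ideal.absNorm I : ℝ)
  calc boxDensity b I u N
      ≤ q⁻¹ + C / N * q ^ (-1 + (Fintype.card ι : ℝ)⁻¹) := by
        linarith [le_of_abs_le (hC I u N hI hN hIN)]
    _ ≤ q⁻¹ + C / N * (q⁻¹ * (K * N)) := by
        rw [Real.rpow_add hq0, Real.rpow_neg_one]
        gcongr
    _ = (1 + C * K) * q⁻¹ := by field_simp

end BoxDensity

section PrimeSums

open Finset Real

variable {R : Type*} [CommRing R] [IsDedekindDomain R] [Module.Free ℤ R]

/-- The absolute norm `N𝔭` of a prime ideal. -/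
abbrev primeNorm (v : HeightOneSpectrum R) : ℕ := Ideal.absNorm v.asIdeal

variable [Module.Finite ℤ R]

lemma two_le_primeNorm (v : HeightOneSpectrum R) : (2 : ℝ) ≤ primeNorm v := by
  exact_mod_cast HeightOneSpectrum.one_lt_absNorm v

lemma primeNorm_pos (v : HeightOneSpectrum R) : (0 : ℝ) < primeNorm v :=
  two_pos.trans_le (two_le_primeNorm v)

lemma log_primeNorm_pos (v : HeightOneSpectrum R) : 0 < log (primeNorm v) :=
  log_pos (one_lt_two.trans_le (two_le_primeNorm v))

lemma sum_log_primeNorm_le_log_absNorm {I : Ideal R} (hI : I ≠ ⊥)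
    (s : Finset (HeightOneSpectrum R)) (hs : ∀ v ∈ s, v.asIdeal ∣ I) :
    ∑ v ∈ s, log (primeNorm v) ≤ log (Ideal.absNorm I) := by
  classical
  have hinj : Set.InjOn (HeightOneSpectrum.asIdeal : HeightOneSpectrum R → Ideal R) s :=
    fun _ _ _ _ ↦ HeightOneSpectrum.ext
  have hdvd : ∏ v ∈ s, v.asIdeal ∣ I := by
    rw [← prod_image (f := fun J : Ideal R ↦ J) hinj]
    refine prod_primes_dvd _ ?_ ?_ <;> simp only [forall_mem_image]
    exacts [fun v _ ↦ v.prime, hs]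
  rw [← log_prod fun v _ ↦ (primeNorm_pos v).ne', ← Nat.cast_prod, ← map_prod]
  have hpos : 0 < Ideal.absNorm I := Nat.pos_of_ne_zero (Ideal.absNorm_eq_zero_iff.not.mpr hI)
  have hpos' : 0 < Ideal.absNorm (∏ v ∈ s, v.asIdeal) :=
    Nat.pos_of_dvd_of_pos (map_dvd _ hdvd) hpos
  exact log_le_log (by exact_mod_cast hpos')
    (by exact_mod_cast Nat.le_of_dvd hpos (map_dvd _ hdvd))

variable [CharZero R]

variable (R) in
lemma finite_setOf_primeNorm_le (t : ℝ) :
    {v : HeightOneSpectrum R | (primeNorm v : ℝ) ≤ t}.Finite :=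
  (Ideal.finite_setOfPred_absNorm_le (S := R) ⌊t⌋₊).preimage (fun _ _ _ _ ↦ HeightOneSpectrum.ext)
    |>.subset fun _ hv ↦ Nat.le_floor hv

variable (R) in
/-- The prime ideals of norm at most `t`. -/
def primesNormLE (t : ℝ) : Finset (HeightOneSpectrum R) := (finite_setOf_primeNorm_le R t).toFinset

@[simp]
lemma mem_primesNormLE {t : ℝ} {v : HeightOneSpectrum R} :
    v ∈ primesNormLE R t ↔ (primeNorm v : ℝ) ≤ t := by
  simp [primesNormLE]

lemma primesNormLE_mono {s t : ℝ} (h : s ≤ t) : primesNormLE R s ⊆ primesNormLE R t := by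
  intro v
  simpa using fun hv ↦ hv.trans h

lemma primesNormLE_eq_empty {t : ℝ} (ht : t < 2) : primesNormLE R t = ∅ :=
  eq_empty_of_forall_notMem fun v hv ↦
    ((two_le_primeNorm v).trans (mem_primesNormLE.mp hv)).not_gt ht

variable (R) in
/-- The pairs `(𝔭, j)` with `1 ≤ j` and `N(𝔭 ^ j) ≤ n`. -/
def primePowersNormLE (n : ℕ) : Finset (Σ _ : HeightOneSpectrum R, ℕ) :=
  (primesNormLE R n).sigma fun v ↦ Icc 1 (Nat.log (primeNorm v) n)

lemma mk_mem_primePowersNormLE {n : ℕ} (hn : n ≠ 0) {v : HeightOneSpectrum R} {j : ℕ} :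
    ⟨v, j⟩ ∈ primePowersNormLE R n ↔ 1 ≤ j ∧ primeNorm v ^ j ≤ n := by
  simp only [primePowersNormLE, mem_sigma, mem_primesNormLE, Nat.cast_le, mem_Icc,
    Nat.le_log_iff_pow_le (HeightOneSpectrum.one_lt_absNorm v) hn]
  refine and_iff_right_of_imp fun h ↦ ?_
  exact (Nat.le_self_pow (Nat.one_le_iff_ne_zero.mp h.1) _).trans h.2

open Classical in
lemma log_absNorm_le_sum_primePowersNormLE {I : Ideal R} (hI : I ≠ ⊥) {n : ℕ}
    (hn : Ideal.absNorm I ≤ n) :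
    log (Ideal.absNorm I) ≤
      ∑ p ∈ primePowersNormLE R n with p.1.asIdeal ^ p.2 ∣ I, log (primeNorm p.1) := by
  have hI0 : Ideal.absNorm I ≠ 0 := Ideal.absNorm_eq_zero_iff.not.mpr hI
  have hfin : (Function.mulSupport fun v : HeightOneSpectrum R ↦ v.maxPowDividing I).Finite :=
    Ideal.hasFiniteMulSupport hI
  set e : HeightOneSpectrum R → ℕ :=
    fun v ↦ (Associates.mk v.asIdeal).count (Associates.mk I).factors
  have hfactor : ∏ v ∈ hfin.toFinset, v.asIdeal ^ e v = I :=
    (finprod_eq_prod _ hfin).symm.trans (Ideal.finprod_heightOneSpectrum_factorization hI)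
  calc log (Ideal.absNorm I) = ∑ v ∈ hfin.toFinset, ∑ _j ∈ Icc 1 (e v), log (primeNorm v) := by
        conv_lhs => rw [← hfactor, map_prod, Nat.cast_prod]
        simp only [map_pow, Nat.cast_pow]
        rw [log_prod fun v _ ↦ (pow_pos (primeNorm_pos v) _).ne']
        simp [log_pow]
    _ = ∑ p ∈ hfin.toFinset.sigma fun v ↦ Icc 1 (e v), log (primeNorm p.1) := sum_sigma' ..
    _ ≤ _ := by
        refine sum_le_sum_of_subset_of_nonneg ?_ fun p _ _ ↦ (log_primeNorm_pos p.1).le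
        rintro ⟨v, j⟩ hp
        obtain ⟨hv, hj⟩ := mem_sigma.mp hp
        obtain ⟨hj1, hje⟩ := mem_Icc.mp hj
        have hdvd : v.asIdeal ^ j ∣ I :=
          (pow_dvd_pow _ hje).trans (hfactor ▸ dvd_prod_of_mem _ hv)
        have hle : primeNorm v ^ j ≤ Ideal.absNorm I := by
          rw [primeNorm, ← map_pow]
          exact Nat.le_of_dvd hI0.bot_lt (map_dvd _ hdvd)
        rw [mem_filter, mk_mem_primePowersNormLE (by omega)]
        exact ⟨⟨hj1, hle.trans hn⟩, hdvd⟩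

/-- Every prime ideal of norm at most `t` divides the primorial of `t`. -/
lemma sum_log_primeNorm_le {t : ℝ} (ht : 0 ≤ t) :
    ∑ v ∈ primesNormLE R t, log (primeNorm v) ≤ Module.finrank ℤ R * log 4 * t := by
  have hI : Ideal.span {((primorial ⌊t⌋₊ : ℕ) : R)} ≠ ⊥ := by
    rw [Ne, Ideal.span_singleton_eq_bot]
    exact_mod_cast (primorial_pos _).ne'
  refine (sum_log_primeNorm_le_log_absNorm hI _ fun v hv ↦ ?_).trans ?_
  · have := v.isPrime
    have : NeZero v.asIdeal := ⟨v.ne_bot⟩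
    set p := Ideal.absNorm (v.asIdeal.under ℤ)
    have hp : p.Prime := Nat.absNorm_under_prime v.asIdeal
    have hpt : p ≤ ⌊t⌋₊ := Nat.le_floor <| (mem_primesNormLE.mp hv).trans' <| by
      exact_mod_cast Nat.le_of_dvd (zero_lt_one.trans (HeightOneSpectrum.one_lt_absNorm v))
        (Int.absNorm_under_dvd_absNorm v.asIdeal)
    obtain ⟨c, hc⟩ := hp.dvd_primorial_iff.mpr hpt
    rw [Ideal.dvd_span_singleton, hc, Nat.cast_mul]
    exact v.asIdeal.mul_mem_right _ (Int.absNorm_under_mem v.asIdeal)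
  · rw [Ideal.absNorm_span_natCast, Nat.cast_pow, log_pow, mul_assoc]
    gcongr
    rw [← Chebyshev.theta_eq_log_primorial]
    exact Chebyshev.theta_le_log4_mul_x ht

variable (R) in
/-- Dyadic decomposition of the sum, with Chebyshev's bound on each block. -/
lemma sum_log_mul_rpow_le_sum_two_rpow_pow {s : ℝ} (hs : 0 ≤ s) (m : ℕ) :
    ∑ v ∈ primesNormLE R (2 ^ m), log (primeNorm v) * (primeNorm v : ℝ) ^ (-s) ≤
      2 * (Module.finrank ℤ R * log 4) * ∑ i ∈ range m, ((2 : ℝ) ^ (1 - s)) ^ i := by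
  classical
  induction m with
  | zero => simp [primesNormLE_eq_empty (R := R) one_lt_two]
  | succ m ih =>
    have hsub : primesNormLE R (2 ^ m) ⊆ primesNormLE R (2 ^ (m + 1)) :=
      primesNormLE_mono (pow_le_pow_right₀ one_le_two m.le_succ)
    rw [← sum_sdiff hsub, sum_range_succ, mul_add, add_comm]
    refine add_le_add ih ?_
    calc ∑ v ∈ primesNormLE R (2 ^ (m + 1)) \ primesNormLE R (2 ^ m),
          log (primeNorm v) * (primeNorm v : ℝ) ^ (-s)
        ≤ ∑ v ∈ primesNormLE R (2 ^ (m + 1)) \ primesNormLE R (2 ^ m),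
            log (primeNorm v) * ((2 : ℝ) ^ m) ^ (-s) := by
          refine sum_le_sum fun v hv ↦ ?_
          rw [mem_sdiff, mem_primesNormLE, mem_primesNormLE, not_le] at hv
          refine mul_le_mul_of_nonneg_left ?_ (log_primeNorm_pos v).le
          exact rpow_le_rpow_of_nonpos (by positivity) hv.2.le (by linarith)
      _ ≤ (∑ v ∈ primesNormLE R (2 ^ (m + 1)), log (primeNorm v)) * ((2 : ℝ) ^ m) ^ (-s) := by
          rw [← sum_mul]
          gcongr ?_ * _
          exact sum_le_sum_of_subset_of_nonneg sdiff_subset fun v _ _ ↦ (log_primeNorm_pos v).le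
      _ ≤ Module.finrank ℤ R * log 4 * 2 ^ (m + 1) * ((2 : ℝ) ^ m) ^ (-s) := by
          gcongr
          exact sum_log_primeNorm_le (by positivity)
      _ = 2 * (Module.finrank ℤ R * log 4) * ((2 : ℝ) ^ (1 - s)) ^ m := by
          rw [rpow_pow_comm two_pos.le, sub_eq_add_neg, rpow_add (by positivity), rpow_one]
          ring

variable (R) in
lemma exists_sum_log_mul_rpow_le_mul_rpow {a : ℝ} (ha : 0 < a) (ha1 : a ≤ 1) :
    ∃ E : ℝ, 0 ≤ E ∧ ∀ t : ℝ, 1 ≤ t →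
      ∑ v ∈ primesNormLE R t, log (primeNorm v) * (primeNorm v : ℝ) ^ (-1 + a) ≤ E * t ^ a := by
  have h2a : 1 < (2 : ℝ) ^ a := one_lt_rpow one_lt_two ha
  refine ⟨2 * (Module.finrank ℤ R * log 4) * 2 ^ a / (2 ^ a - 1), by positivity, fun t ht ↦ ?_⟩
  obtain ⟨n, hnt, htn⟩ := exists_nat_pow_near ht one_lt_two
  calc ∑ v ∈ primesNormLE R t, log (primeNorm v) * (primeNorm v : ℝ) ^ (-1 + a)
      ≤ ∑ v ∈ primesNormLE R (2 ^ (n + 1)), log (primeNorm v) * (primeNorm v : ℝ) ^ (-(1 - a)) := by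
        rw [neg_sub, sub_eq_neg_add]
        refine sum_le_sum_of_subset_of_nonneg (primesNormLE_mono htn.le) fun v _ _ ↦ by
          positivity
    _ ≤ 2 * (Module.finrank ℤ R * log 4) * ∑ i ∈ range (n + 1), ((2 : ℝ) ^ a) ^ i := by
        simpa only [sub_sub_cancel] using
          sum_log_mul_rpow_le_sum_two_rpow_pow R (sub_nonneg.mpr ha1) (n + 1)
    _ ≤ 2 * (Module.finrank ℤ R * log 4) * (2 ^ a * t ^ a / (2 ^ a - 1)) := by
        rw [geom_sum_eq h2a.ne']
        gcongr
        rw [pow_succ', rpow_pow_comm two_pos.le]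
        linarith [show (2 : ℝ) ^ a * (2 ^ n) ^ a ≤ 2 ^ a * t ^ a by gcongr]
    _ = _ := by ring

variable (R) in
lemma exists_sum_log_mul_rpow_le {s : ℝ} (hs : 1 < s) :
    ∃ E : ℝ, 0 ≤ E ∧ ∀ t : ℝ,
      ∑ v ∈ primesNormLE R t, log (primeNorm v) * (primeNorm v : ℝ) ^ (-s) ≤ E := by
  have h2s : (2 : ℝ) ^ (1 - s) < 1 := rpow_lt_one_of_one_lt_of_neg one_lt_two (by linarith)
  refine ⟨2 * (Module.finrank ℤ R * log 4) * (1 / (1 - 2 ^ (1 - s))), by positivity, fun t ↦ ?_⟩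
  obtain ⟨n, hn⟩ := pow_unbounded_of_one_lt t one_lt_two
  calc ∑ v ∈ primesNormLE R t, log (primeNorm v) * (primeNorm v : ℝ) ^ (-s)
      ≤ ∑ v ∈ primesNormLE R (2 ^ n), log (primeNorm v) * (primeNorm v : ℝ) ^ (-s) := by
        refine sum_le_sum_of_subset_of_nonneg (primesNormLE_mono hn.le) fun v _ _ ↦ by
          positivity
    _ ≤ 2 * (Module.finrank ℤ R * log 4) * ∑ i ∈ range n, ((2 : ℝ) ^ (1 - s)) ^ i :=
        sum_log_mul_rpow_le_sum_two_rpow_pow R (by linarith) n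
    _ ≤ 2 * (Module.finrank ℤ R * log 4) * (1 / (1 - 2 ^ (1 - s))) := by
        gcongr
        rw [range_eq_Ico]
        simpa using geom_sum_Ico_le_of_lt_one (m := 0) (n := n) (by positivity) h2s

end PrimeSums

section NormOnBoxes

open Finset

variable {k ι : Type*} [Field k] [NumberField k]

lemma absNorm_span_singleton_eq_prod_norm (x : 𝓞 k) :
    (Ideal.absNorm (Ideal.span {x}) : ℝ) = ∏ σ : k →ₐ[ℚ] ℂ, ‖σ x‖ := by
  rw [Ideal.absNorm_span_singleton, ← norm_prod, ← Algebra.norm_eq_prod_embeddings ℚ ℂ (x : k),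
    ← Algebra.coe_norm_int]
  simp

lemma exists_norm_embedding_le [Finite ι] (b : Module.Basis ι ℤ (𝓞 k)) :
    ∃ A : ℕ, ∀ (x : 𝓞 k) (N : ℕ), (∀ i, |b.repr x i| ≤ N) →
      ∀ σ : k →ₐ[ℚ] ℂ, ‖σ x‖ ≤ A * N := by
  have := Fintype.ofFinite ι
  obtain ⟨A, hA⟩ := exists_nat_ge (∑ σ : k →ₐ[ℚ] ℂ, ∑ i, ‖σ (b i : k)‖)
  refine ⟨A, fun x N hx σ ↦ ?_⟩
  have hσ : σ x = ∑ i, (b.repr x i : ℂ) * σ (b i : k) := by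
    conv_lhs => rw [← b.sum_repr x]
    simp
  have hxi (i : ι) : ‖(b.repr x i : ℂ)‖ ≤ N := by
    rw [Complex.norm_intCast]
    exact_mod_cast hx i
  calc ‖σ x‖ ≤ ∑ i, ‖(b.repr x i : ℂ)‖ * ‖σ (b i : k)‖ := by
        rw [hσ]
        simpa only [norm_mul] using norm_sum_le univ fun i ↦ (b.repr x i : ℂ) * σ (b i : k)
    _ ≤ ∑ i, N * ‖σ (b i : k)‖ := by gcongr with i; exact hxi i
    _ = (∑ i, ‖σ (b i : k)‖) * N := by rw [← mul_sum, mul_comm]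
    _ ≤ A * N := by
        gcongr
        exact (single_le_sum (f := fun σ : k →ₐ[ℚ] ℂ ↦ ∑ i, ‖σ (b i : k)‖)
          (fun σ _ ↦ by positivity) (mem_univ σ)).trans hA

/-- A cube of side `N` far from the walls: all conjugates of its points are close to a large
multiple of `N`. -/
lemma exists_latticeBox_absNorm_bounds [Fintype ι] (b : Module.Basis ι ℤ (𝓞 k)) :
    ∃ K : ℕ, K ≠ 0 ∧ ∀ N : ℕ, ∃ u : ι → ℤ, ∀ x ∈ latticeBox b u N,
      N ^ Fintype.card ι ≤ Ideal.absNorm (Ideal.span {x}) ∧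
        Ideal.absNorm (Ideal.span {x}) ≤ (K * N) ^ Fintype.card ι := by
  obtain ⟨A, hA⟩ := exists_norm_embedding_le b
  have hcard : Fintype.card ι = #(univ : Finset (k →ₐ[ℚ] ℂ)) := by
    rw [card_univ, AlgHom.card, ← RingOfIntegers.rank, Module.finrank_eq_card_basis b]
  refine ⟨2 * A + 1, by omega, fun N ↦
    ⟨b.repr (((A + 1) * N : ℕ) : 𝓞 k), fun x hx ↦ ?_⟩⟩
  have hσ (σ : k →ₐ[ℚ] ℂ) : ‖σ x - ((A + 1) * N : ℕ)‖ ≤ A * N := by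
    refine (hA (x - ((A + 1) * N : ℕ)) N (fun i ↦ ?_) σ).trans' (by simp)
    have hxi := mem_latticeBox.mp hx i
    rw [Set.mem_Ico] at hxi
    rw [map_sub, Finsupp.sub_apply, abs_le]
    omega
  have hcenter : ‖(((A + 1) * N : ℕ) : ℂ)‖ = (A + 1) * N := by
    rw [Complex.norm_natCast]; push_cast; ring
  have hlower (σ : k →ₐ[ℚ] ℂ) : (N : ℝ) ≤ ‖σ x‖ := by
    linarith [hσ σ, norm_sub_norm_le (((A + 1) * N : ℕ) : ℂ) (σ x),
      norm_sub_rev (σ x) (((A + 1) * N : ℕ) : ℂ)]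
  have hupper (σ : k →ₐ[ℚ] ℂ) : ‖σ x‖ ≤ (2 * A + 1) * N := by
    linarith [hσ σ, norm_sub_norm_le (σ x) (((A + 1) * N : ℕ) : ℂ)]
  rw [← Nat.cast_le (α := ℝ), ← Nat.cast_le (α := ℝ), absNorm_span_singleton_eq_prod_norm, hcard]
  push_cast
  rw [← prod_const, ← prod_const]
  exact ⟨prod_le_prod (fun _ _ ↦ by positivity) fun σ _ ↦ hlower σ,
    prod_le_prod (fun _ _ ↦ by positivity) fun σ _ ↦ hupper σ⟩

end NormOnBoxes

section Mertens

open Finset Real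

lemma exists_pow_le_le_two_mul_pow {d : ℕ} (hd : d ≠ 0) {t : ℝ} (ht : 1 ≤ t) :
    ∃ N : ℕ, N ≠ 0 ∧ (N : ℝ) ^ d ≤ t ∧ t ≤ (2 * N) ^ d := by
  have hroot : 1 ≤ t ^ (d : ℝ)⁻¹ := one_le_rpow ht (by positivity)
  have hpow : (t ^ (d : ℝ)⁻¹) ^ d = t := rpow_inv_natCast_pow (by positivity) hd
  have hN : 1 ≤ ⌊t ^ (d : ℝ)⁻¹⌋₊ := Nat.le_floor (by simpa using hroot)
  have hN' : (1 : ℝ) ≤ ⌊t ^ (d : ℝ)⁻¹⌋₊ := by exact_mod_cast hN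
  refine ⟨⌊t ^ (d : ℝ)⁻¹⌋₊, by omega, ?_, ?_⟩
  · exact (pow_le_pow_left₀ (by positivity) (Nat.floor_le (by positivity)) d).trans_eq hpow
  · refine hpow.symm.le.trans (pow_le_pow_left₀ (by positivity) ?_ d)
    linarith [Nat.lt_floor_add_one (t ^ (d : ℝ)⁻¹)]

section PrimePowers

variable {ι R : Type*} [Fintype ι] [CommRing R] [IsDedekindDomain R] [Module.Free ℤ R]

lemma exists_sum_boxDensity_pow_le (b : Module.Basis ι ℤ R) (K : ℕ) :
    ∃ C G : ℝ, 0 ≤ C ∧ 0 ≤ G ∧ ∀ (v : HeightOneSpectrum R) (u : ι → ℤ) (N : ℕ), N ≠ 0 →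
      primeNorm v ≤ (K * N) ^ Fintype.card ι →
      ∑ j ∈ Icc 1 (Nat.log (primeNorm v) ((K * N) ^ Fintype.card ι)),
          boxDensity b (v.asIdeal ^ j) u N ≤
        (primeNorm v : ℝ)⁻¹ + C / N * (primeNorm v : ℝ) ^ (-1 + (Fintype.card ι : ℝ)⁻¹) +
          G * (primeNorm v : ℝ) ^ (-2 : ℝ) := by
  obtain ⟨C, hC0, hC⟩ := exists_abs_boxDensity_sub_le b K
  obtain ⟨G, hG0, hG⟩ := exists_boxDensity_le b K
  refine ⟨C, G * 2, hC0, by positivity, fun v u N hN hv ↦ ?_⟩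
  have := Module.Finite.of_basis b
  have hone : 1 < primeNorm v := HeightOneSpectrum.one_lt_absNorm v
  have hq := two_le_primeNorm v
  have hinv : (primeNorm v : ℝ)⁻¹ ≤ 2⁻¹ := inv_anti₀ two_pos hq
  set n := (K * N) ^ Fintype.card ι
  have hn : n ≠ 0 := by omega
  have hfirst := le_of_abs_le (hC v.asIdeal u N v.ne_bot hN hv)
  have hpow : ∀ j ∈ Ioc 1 (Nat.log (primeNorm v) n),
      boxDensity b (v.asIdeal ^ j) u N ≤ G * (primeNorm v : ℝ)⁻¹ ^ j := fun j hj ↦ by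
    have hle := Nat.pow_le_of_le_log hn (mem_Ioc.mp hj).2
    simpa only [map_pow, Nat.cast_pow, inv_pow] using
      hG (v.asIdeal ^ j) u N (pow_ne_zero _ v.ne_bot) hN (by rwa [map_pow])
  have hgeom : ∑ j ∈ Ioc 1 (Nat.log (primeNorm v) n), (primeNorm v : ℝ)⁻¹ ^ j ≤
      2 * (primeNorm v : ℝ) ^ (-2 : ℝ) := by
    have hIoc : Ioc 1 (Nat.log (primeNorm v) n) = Ico 2 (Nat.log (primeNorm v) n + 1) := by
      ext; simp only [mem_Ioc, mem_Ico]; omega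
    rw [hIoc, rpow_neg (by positivity), rpow_two, ← inv_pow]
    refine (geom_sum_Ico_le_of_lt_one (by positivity) (by linarith)).trans ?_
    rw [div_le_iff₀ (by linarith)]
    nlinarith [sq_nonneg (primeNorm v : ℝ)⁻¹]
  rw [← add_sum_Ioc_eq_sum_Icc (Nat.log_pos hone hv), pow_one, mul_assoc]
  refine add_le_add (by linarith) ((sum_le_sum hpow).trans ?_)
  rw [← mul_sum]
  gcongr

variable [Module.Finite ℤ R]

lemma sum_log_mul_boxDensity_le (b : Module.Basis ι ℤ R) {u : ι → ℤ} {N n : ℕ} (hN : N ≠ 0)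
    (hu : ∀ x ∈ latticeBox b u N,
      Ideal.absNorm (Ideal.span {x}) ≠ 0 ∧ Ideal.absNorm (Ideal.span {x}) ≤ n)
    (s : Finset (HeightOneSpectrum R)) :
    ∑ v ∈ s, log (primeNorm v) * boxDensity b v.asIdeal u N ≤ log n := by
  classical
  refine sum_mul_boxDensity_le b hN fun x hx ↦ ?_
  obtain ⟨hne, hle⟩ := hu x hx
  have hdvd : ∀ v ∈ s.filter (x ∈ ·.asIdeal), v.asIdeal ∣ Ideal.span {x} := fun v hv ↦
    Ideal.dvd_span_singleton.mpr (mem_filter.mp hv).2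
  refine (sum_log_primeNorm_le_log_absNorm (Ideal.absNorm_eq_zero_iff.not.mp hne) _ hdvd).trans ?_
  exact log_le_log (by positivity) (by exact_mod_cast hle)

lemma log_le_sum_log_mul_boxDensity [CharZero R] (b : Module.Basis ι ℤ R) {u : ι → ℤ} {N m n : ℕ}
    (hN : N ≠ 0) (hm : m ≠ 0)
    (hu : ∀ x ∈ latticeBox b u N,
      m ≤ Ideal.absNorm (Ideal.span {x}) ∧ Ideal.absNorm (Ideal.span {x}) ≤ n) :
    log m ≤ ∑ p ∈ primePowersNormLE R n,
      log (primeNorm p.1) * boxDensity b (p.1.asIdeal ^ p.2) u N := by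
  classical
  refine le_sum_mul_boxDensity b hN fun x hx ↦ ?_
  obtain ⟨hlower, hupper⟩ := hu x hx
  have hne : Ideal.absNorm (Ideal.span {x}) ≠ 0 := by omega
  calc log m ≤ log (Ideal.absNorm (Ideal.span {x})) :=
        log_le_log (by positivity) (by exact_mod_cast hlower)
    _ ≤ _ := by
        simpa only [Ideal.dvd_span_singleton] using
          log_absNorm_le_sum_primePowersNormLE (Ideal.absNorm_eq_zero_iff.not.mp hne) hupper

end PrimePowers

section MertensSum

variable {R : Type*} [CommRing R] [IsDedekindDomain R] [Module.Free ℤ R] [Module.Finite ℤ R]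
  [CharZero R]

variable (R) in
/-- The sum of `log N𝔭 / N𝔭` over `N𝔭 ≤ t`, the subject of Mertens' first theorem. -/
def mertensSum (t : ℝ) : ℝ := ∑ v ∈ primesNormLE R t, log (primeNorm v) / primeNorm v

lemma mertensSum_nonneg (t : ℝ) : 0 ≤ mertensSum R t :=
  sum_nonneg fun v _ ↦ div_nonneg (log_primeNorm_pos v).le (primeNorm_pos v).le

lemma mertensSum_mono {s t : ℝ} (h : s ≤ t) : mertensSum R s ≤ mertensSum R t :=
  sum_le_sum_of_subset_of_nonneg (primesNormLE_mono h) fun v _ _ ↦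
    div_nonneg (log_primeNorm_pos v).le (primeNorm_pos v).le

end MertensSum

variable {k ι : Type*} [Field k] [NumberField k] [Fintype ι]

lemma exists_mertensSum_pow_le (b : Module.Basis ι ℤ (𝓞 k)) :
    ∃ A : ℝ, ∀ N : ℕ, N ≠ 0 →
      mertensSum (𝓞 k) ((N : ℝ) ^ Fintype.card ι) ≤ log ((N : ℝ) ^ Fintype.card ι) + A := by
  obtain ⟨K, hK, hbox⟩ := exists_latticeBox_absNorm_bounds b
  obtain ⟨C, hC0, hC⟩ := exists_abs_boxDensity_sub_le b 1
  have : Nonempty ι := b.index_nonempty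
  set d := Fintype.card ι
  have hd : d ≠ 0 := Fintype.card_ne_zero
  obtain ⟨E, -, hE⟩ := exists_sum_log_mul_rpow_le_mul_rpow (𝓞 k) (a := (d : ℝ)⁻¹)
    (by positivity) (Nat.cast_inv_le_one d)
  refine ⟨log ((K : ℝ) ^ d) + C * E, fun N hN ↦ ?_⟩
  obtain ⟨u, hu⟩ := hbox N
  have hN1 : (1 : ℝ) ≤ N := by exact_mod_cast Nat.one_le_iff_ne_zero.mpr hN
  set P := primesNormLE (𝓞 k) ((N : ℝ) ^ d)
  have hdensity : ∀ v ∈ P, log (primeNorm v) / primeNorm v ≤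
      log (primeNorm v) * boxDensity b v.asIdeal u N +
        C / N * (log (primeNorm v) * (primeNorm v : ℝ) ^ (-1 + (d : ℝ)⁻¹)) := fun v hv ↦ by
    have hvN : primeNorm v ≤ (1 * N) ^ d := by
      rw [one_mul]
      exact_mod_cast mem_primesNormLE.mp hv
    have hle := neg_le_of_abs_le (hC v.asIdeal u N v.ne_bot hN hvN)
    calc log (primeNorm v) / primeNorm v = log (primeNorm v) * (primeNorm v : ℝ)⁻¹ :=
          div_eq_mul_inv ..
      _ ≤ log (primeNorm v) * (boxDensity b v.asIdeal u N +
            C / N * (primeNorm v : ℝ) ^ (-1 + (d : ℝ)⁻¹)) := by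
          gcongr
          linarith
      _ = _ := by ring
  have haverage := sum_log_mul_boxDensity_le b hN (n := (K * N) ^ d)
    (fun x hx ↦ ⟨((by positivity : 0 < N ^ d).trans_le (hu x hx).1).ne', (hu x hx).2⟩) P
  have herror := hE _ (one_le_pow₀ hN1 (n := d))
  rw [pow_rpow_inv_natCast (by positivity) hd] at herror
  calc mertensSum (𝓞 k) ((N : ℝ) ^ d) ≤ log (((K * N) ^ d : ℕ) : ℝ) + C / N * (E * N) := by
        refine (sum_le_sum hdensity).trans ?_
        rw [sum_add_distrib, ← mul_sum]
        gcongr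
    _ = log ((N : ℝ) ^ d) + (log ((K : ℝ) ^ d) + C * E) := by
        push_cast
        rw [mul_pow, log_mul (by positivity) (by positivity)]
        field_simp
        ring

lemma exists_log_pow_le_mertensSum (b : Module.Basis ι ℤ (𝓞 k)) :
    ∃ K : ℕ, ∃ A : ℝ, K ≠ 0 ∧ ∀ N : ℕ, N ≠ 0 →
      log ((N : ℝ) ^ Fintype.card ι) ≤ mertensSum (𝓞 k) ((K * N) ^ Fintype.card ι) + A := by
  obtain ⟨K, hK, hbox⟩ := exists_latticeBox_absNorm_bounds b
  obtain ⟨C, G, hC0, hG0, hCG⟩ := exists_sum_boxDensity_pow_le b K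
  have : Nonempty ι := b.index_nonempty
  set d := Fintype.card ι
  have hd : d ≠ 0 := Fintype.card_ne_zero
  obtain ⟨E, -, hE⟩ := exists_sum_log_mul_rpow_le_mul_rpow (𝓞 k) (a := (d : ℝ)⁻¹)
    (by positivity) (Nat.cast_inv_le_one d)
  obtain ⟨E', -, hE'⟩ := exists_sum_log_mul_rpow_le (𝓞 k) one_lt_two
  refine ⟨K, C * E * K + G * E', hK, fun N hN ↦ ?_⟩
  obtain ⟨u, hu⟩ := hbox N
  set n : ℕ := (K * N) ^ d with hn
  have hn1 : (1 : ℝ) ≤ n := by exact_mod_cast Nat.one_le_iff_ne_zero.mpr (by positivity)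
  have haverage := log_le_sum_log_mul_boxDensity b hN (by positivity) hu
  have hdensity : ∀ v ∈ primesNormLE (𝓞 k) n, ∑ j ∈ Icc 1 (Nat.log (primeNorm v) n),
      log (primeNorm v) * boxDensity b (v.asIdeal ^ j) u N ≤
        log (primeNorm v) / primeNorm v +
          C / N * (log (primeNorm v) * (primeNorm v : ℝ) ^ (-1 + (d : ℝ)⁻¹)) +
          G * (log (primeNorm v) * (primeNorm v : ℝ) ^ (-2 : ℝ)) := fun v hv ↦ by
    rw [← mul_sum]
    refine (mul_le_mul_of_nonneg_left (hCG v u N hN (by exact_mod_cast mem_primesNormLE.mp hv))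
      (log_primeNorm_pos v).le).trans_eq ?_
    ring
  have herror := hE n hn1
  rw [hn, Nat.cast_pow, pow_rpow_inv_natCast (by positivity) hd, ← Nat.cast_pow, ← hn] at herror
  calc log ((N : ℝ) ^ d) = log ((N ^ d : ℕ) : ℝ) := by rw [Nat.cast_pow]
    _ ≤ mertensSum (𝓞 k) n + C / N * (E * (K * N : ℕ)) + G * E' := by
        refine haverage.trans ?_
        rw [primePowersNormLE, sum_sigma]
        refine (sum_le_sum hdensity).trans ?_
        rw [sum_add_distrib, sum_add_distrib, ← mul_sum, ← mul_sum]
        gcongr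
        exacts [le_rfl, hE' n]
    _ = mertensSum (𝓞 k) ((K * N) ^ d) + (C * E * K + G * E') := by
        rw [hn]
        push_cast
        field_simp
        ring

variable (k) in
lemma exists_abs_mertensSum_sub_log_le :
    ∃ A : ℝ, 0 < A ∧ ∀ t : ℝ, 1 ≤ t → |mertensSum (𝓞 k) t - log t| ≤ A := by
  let b := RingOfIntegers.basis k
  obtain ⟨A, hA⟩ := exists_mertensSum_pow_le b
  obtain ⟨K, B, hK, hB⟩ := exists_log_pow_le_mertensSum b
  set d := Fintype.card (Module.Free.ChooseBasisIndex ℤ (𝓞 k))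
  have hd : d ≠ 0 := Fintype.card_ne_zero
  have hlogK : 0 ≤ log ((K : ℝ) ^ d) := by exact_mod_cast log_natCast_nonneg (K ^ d)
  have hlog2 : 0 < log ((2 : ℝ) ^ d) := log_pos (one_lt_pow₀ one_lt_two hd)
  refine ⟨|A| + |B| + log ((2 : ℝ) ^ d) + log ((K : ℝ) ^ d), by positivity, fun t ht ↦ ?_⟩
  refine abs_sub_le_iff.mpr ⟨?_, ?_⟩
  · obtain ⟨N, hN, hNt, htN⟩ := exists_pow_le_le_two_mul_pow hd ht
    have hupper := hA (2 * N) (by positivity)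
    rw [Nat.cast_mul, Nat.cast_ofNat] at hupper
    have hlogN := log_le_log (by positivity) hNt
    rw [mul_pow, log_mul (by positivity) (by positivity), ← mul_pow] at hupper
    linarith [mertensSum_mono (R := 𝓞 k) htN, le_abs_self A, abs_nonneg B]
  · rcases le_total t ((K : ℝ) ^ d) with htK | hKt
    · linarith [log_le_log (by positivity) htK, mertensSum_nonneg (R := 𝓞 k) t, abs_nonneg A,
        abs_nonneg B]
    obtain ⟨n, hn, hnt, htn⟩ := exists_pow_le_le_two_mul_pow hd
      ((one_le_div (by positivity)).mpr hKt)
    have hlower := hB n hn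
    rw [le_div_iff₀ (by positivity), ← mul_pow, mul_comm] at hnt
    have hlogn := log_le_log (by positivity) htn
    rw [log_div (by positivity) (by positivity), mul_pow,
      log_mul (by positivity) (by positivity)] at hlogn
    linarith [mertensSum_mono (R := 𝓞 k) hnt, le_abs_self B, abs_nonneg A]

end Mertens

section PrimeRpowSum

open Finset Real Filter

variable {R : Type*} [CommRing R] [IsDedekindDomain R] [Module.Free ℤ R] [Module.Finite ℤ R]
  [CharZero R]

variable (R) in
/-- The sum of `(N𝔭)^(-1 + δ)` over `N𝔭 ≤ t`, of which `β_k(·; δ)` is the generalized inverse. -/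
def primeRpowSum (δ t : ℝ) : ℝ := ∑ v ∈ primesNormLE R t, (primeNorm v : ℝ) ^ (-1 + δ)

lemma primeRpowSum_nonneg (δ t : ℝ) : 0 ≤ primeRpowSum R δ t :=
  sum_nonneg fun _ _ ↦ by positivity

lemma primeRpowSum_mono {s t : ℝ} (δ : ℝ) (h : s ≤ t) : primeRpowSum R δ s ≤ primeRpowSum R δ t :=
  sum_le_sum_of_subset_of_nonneg (primesNormLE_mono h) fun _ _ _ ↦ by positivity

lemma primeRpowSum_mono_left {δ ε : ℝ} (t : ℝ) (h : δ ≤ ε) :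
    primeRpowSum R δ t ≤ primeRpowSum R ε t := by
  refine sum_le_sum fun v _ ↦ rpow_le_rpow_of_exponent_le ?_ (by linarith)
  linarith [two_le_primeNorm v]

variable {A : ℝ}

/-- On the window `s < N𝔭 ≤ t` each term is at least `log N𝔭 / N𝔭 * (s ^ δ / log t)`. -/
lemma primeRpowSum_add_le (hA : ∀ t, 1 ≤ t → |mertensSum R t - log t| ≤ A) {δ s t : ℝ}
    (hδ : 0 ≤ δ) (hs : 1 ≤ s) (hst : s ≤ t) (ht : 1 < t) :
    primeRpowSum R δ s + (log (t / s) - 2 * A) * (s ^ δ / log t) ≤ primeRpowSum R δ t := by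
  classical
  have hlogt : 0 < log t := log_pos ht
  have hsub : primesNormLE R s ⊆ primesNormLE R t := primesNormLE_mono hst
  have hwindow : log (t / s) - 2 * A ≤
      ∑ v ∈ primesNormLE R t \ primesNormLE R s, log (primeNorm v) / primeNorm v := by
    rw [log_div (by positivity) (by positivity)]
    have hsplit : ∑ v ∈ primesNormLE R t \ primesNormLE R s, log (primeNorm v) / primeNorm v +
        mertensSum R s = mertensSum R t := sum_sdiff hsub
    linarith [neg_le_of_abs_le (hA t ht.le), le_of_abs_le (hA s hs)]
  have hterm : ∀ v ∈ primesNormLE R t \ primesNormLE R s,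
      log (primeNorm v) / primeNorm v * (s ^ δ / log t) ≤ (primeNorm v : ℝ) ^ (-1 + δ) := by
    intro v hv
    rw [Finset.mem_sdiff, mem_primesNormLE, mem_primesNormLE, not_le] at hv
    have hq := primeNorm_pos v
    calc log (primeNorm v) / primeNorm v * (s ^ δ / log t)
        ≤ log t / primeNorm v * ((primeNorm v : ℝ) ^ δ / log t) := by
          gcongr
          exacts [hv.1, hv.2.le]
      _ = (primeNorm v : ℝ) ^ (-1 + δ) := by
          rw [rpow_add hq, rpow_neg_one]
          field_simp
  rw [add_comm, primeRpowSum, primeRpowSum, ← sum_sdiff hsub]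
  gcongr
  calc (log (t / s) - 2 * A) * (s ^ δ / log t)
      ≤ (∑ v ∈ primesNormLE R t \ primesNormLE R s, log (primeNorm v) / primeNorm v) *
          (s ^ δ / log t) := by gcongr
    _ ≤ _ := by
        rw [sum_mul]
        exact sum_le_sum hterm

lemma primeRpowSum_rpow_inv_add_le (hA : ∀ t, 1 ≤ t → |mertensSum R t - log t| ≤ A) {δ y z : ℝ}
    (hδ : 0 < δ) (hz : 1 ≤ z) (hzy : z ≤ y) (hy : 1 < y) :
    primeRpowSum R δ (z ^ (1 / δ)) + (log (y / z) - 2 * A * δ) * (z / log y) ≤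
      primeRpowSum R δ (y ^ (1 / δ)) := by
  have hlogy : 0 < log y := log_pos hy
  have h := primeRpowSum_add_le hA hδ.le (one_le_rpow hz (by positivity))
    (rpow_le_rpow (by positivity) hzy (by positivity)) (one_lt_rpow hy (one_div_pos.mpr hδ))
  rw [← div_rpow (by positivity) (by positivity), log_rpow (by positivity),
    log_rpow (by positivity), ← rpow_mul (by positivity), one_div_mul_cancel hδ.ne', rpow_one] at h
  convert h using 2
  field_simp

lemma exists_le_primeRpowSum_zero (hA : ∀ t, 1 ≤ t → |mertensSum R t - log t| ≤ A) (hA0 : 0 < A)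
    (X : ℝ) : ∃ T, 1 < T ∧ X ≤ primeRpowSum R 0 T := by
  have hsquare (T : ℝ) (hT : 4 * A ≤ log T) (hT1 : 1 < T) :
      primeRpowSum R 0 T + 1 / 4 ≤ primeRpowSum R 0 (T ^ 2) := by
    have hlogT : 0 < log T := log_pos hT1
    have hwindow := primeRpowSum_add_le hA le_rfl hT1.le (le_self_pow₀ hT1.le two_ne_zero)
      (one_lt_pow₀ hT1 two_ne_zero)
    refine le_trans ?_ hwindow
    gcongr
    rw [sq, mul_self_div_self, ← sq, log_pow, rpow_zero, mul_one_div, Nat.cast_ofNat,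
      div_le_div_iff₀ (by norm_num) (by positivity)]
    linarith
  have hpow (m : ℕ) : (m : ℝ) / 4 ≤ primeRpowSum R 0 (exp (4 * A) ^ 2 ^ m) := by
    induction m with
    | zero => simpa using primeRpowSum_nonneg 0 _
    | succ m ih =>
      have hone : (1 : ℝ) ≤ 2 ^ m := one_le_pow₀ one_le_two
      have hlog : log (exp (4 * A) ^ 2 ^ m) = 2 ^ m * (4 * A) := by
        rw [log_pow, log_exp, Nat.cast_pow, Nat.cast_ofNat]
      have hstep := hsquare (exp (4 * A) ^ 2 ^ m)
        (hlog ▸ le_mul_of_one_le_left (by positivity) hone)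
        (one_lt_pow₀ (one_lt_exp_iff.mpr (by positivity)) (by positivity))
      rw [pow_succ, pow_mul, Nat.cast_succ]
      linarith
  obtain ⟨m, hm⟩ := exists_nat_ge (4 * X)
  exact ⟨_, one_lt_pow₀ (one_lt_exp_iff.mpr (by positivity)) (by positivity),
    (by linarith : X ≤ m / 4).trans (hpow m)⟩

lemma exists_forall_le_primeRpowSum_rpow_inv
    (hA : ∀ t, 1 ≤ t → |mertensSum R t - log t| ≤ A) (hA0 : 0 < A) (X : ℝ) :
    ∃ δ₀, 0 < δ₀ ∧ ∀ δ y, 0 < δ → δ ≤ δ₀ → 2 ≤ y → X ≤ primeRpowSum R δ (y ^ (1 / δ)) := by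
  obtain ⟨T, hT, hX⟩ := exists_le_primeRpowSum_zero hA hA0 X
  have hlogT := log_pos hT
  refine ⟨log 2 / log T, by positivity, fun δ y hδ hδT hy ↦ ?_⟩
  have hTy : T ≤ y ^ (1 / δ) := by
    rw [one_div, le_rpow_inv_iff_of_pos (by positivity) (by positivity) hδ]
    refine le_trans ?_ hy
    rw [← log_le_log_iff (by positivity) two_pos, log_rpow (by positivity)]
    exact (le_div_iff₀ hlogT).mp hδT
  exact hX.trans ((primeRpowSum_mono_left T hδ.le).trans (primeRpowSum_mono δ hTy))

/-- A single window `(y / r, y]` would give at most the constant `1 / e`, and the application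
requires more than `1 / 2`, hence the two windows `(y / 4, y / 2]` and `(y / 2, y]`. -/
lemma mul_div_log_le_primeRpowSum_rpow_inv (hA : ∀ t, 1 ≤ t → |mertensSum R t - log t| ≤ A)
    {δ y : ℝ} (hδ : 0 < δ) (hδA : 2 * A * δ ≤ 1 / 100) (hy : 4 ≤ y) :
    51 / 100 * (y / log y) ≤ primeRpowSum R δ (y ^ (1 / δ)) := by
  have hlogy : 0 < log (y / 2) := log_pos (by linarith)
  have houter := primeRpowSum_rpow_inv_add_le hA hδ (z := y / 2) (by linarith) (by linarith)
    (by linarith : 1 < y)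
  have hinner := primeRpowSum_rpow_inv_add_le hA hδ (z := y / 4) (by linarith)
    (by linarith : y / 4 ≤ y / 2) (by linarith)
  rw [show y / (y / 2) = 2 by field_simp] at houter
  rw [show y / 2 / (y / 4) = 2 by field_simp; norm_num] at hinner
  have hgain : 683 / 1000 ≤ log 2 - 2 * A * δ := by linarith [log_two_gt_d9]
  calc 51 / 100 * (y / log y)
      ≤ 683 / 1000 * (y / 4 / log y) + 683 / 1000 * (y / 2 / log y) := by
        have : 0 ≤ y / log y := by have := log_pos (by linarith : 1 < y); positivity
        rw [div_right_comm y 4, div_right_comm y 2]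
        linarith
    _ ≤ (log 2 - 2 * A * δ) * (y / 4 / log (y / 2)) + (log 2 - 2 * A * δ) * (y / 2 / log y) := by
        have : 0 < log y := log_pos (by linarith)
        gcongr
        linarith
    _ ≤ primeRpowSum R δ (y ^ (1 / δ)) := by
        linarith [primeRpowSum_nonneg (R := R) δ ((y / 4) ^ (1 / δ))]

lemma two_le_two_mul_mul_log {x : ℝ} (hx : 2 ≤ x) : 2 ≤ 2 * x * log x := by
  have := log_le_log two_pos hx
  nlinarith [log_two_gt_d9]

lemma log_two_mul_mul_log_le {x : ℝ} (hx : 1 < x) : log (2 * x * log x) ≤ 2 * log x := by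
  have hlogx : 0 < log x := log_pos hx
  have hle : 2 * log x ≤ x := by
    have := log_le_sub_one_of_pos (show 0 < x / 2 by linarith)
    rw [log_div (by positivity) two_ne_zero] at this
    linarith [log_two_lt_d9]
  calc log (2 * x * log x) ≤ log (x ^ 2) := log_le_log (by positivity) (by nlinarith)
    _ = 2 * log x := by rw [log_pow, Nat.cast_ofNat]

lemma eventually_log_two_mul_mul_log_le {ε : ℝ} (hε : 0 < ε) :
    ∀ᶠ x in atTop, log (2 * x * log x) ≤ (1 + ε) * log x := by
  have hlog : ∀ᶠ u : ℝ in atTop, log (2 * u) ≤ ε * u := by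
    have htwo : Tendsto (fun u : ℝ ↦ 2 * u) atTop atTop := tendsto_id.const_mul_atTop two_pos
    filter_upwards [htwo.eventually (isLittleO_log_id_atTop.bound (half_pos hε)),
      eventually_ge_atTop 0] with u hu hu0
    rw [id_eq, norm_of_nonneg (mul_nonneg two_pos.le hu0)] at hu
    linarith [le_norm_self (log (2 * u))]
  filter_upwards [tendsto_log_atTop.eventually hlog, eventually_gt_atTop 1] with x hx hx1
  have hlogx : 0 < log x := log_pos hx1
  calc log (2 * x * log x) = log x + log (2 * log x) := by
        rw [← log_mul (by positivity) (by positivity)]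
        ring_nf
    _ ≤ (1 + ε) * log x := by linarith

lemma exists_forall_small_le_primeRpowSum (hA : ∀ t, 1 ≤ t → |mertensSum R t - log t| ≤ A)
    (hA0 : 0 < A) :
    ∃ δ₀, 0 < δ₀ ∧ ∀ δ x, 0 < δ → δ ≤ δ₀ → 2 ≤ x →
      x ≤ primeRpowSum R δ ((2 * x * log x) ^ (1 / δ)) := by
  obtain ⟨X, hX⟩ := eventually_atTop.mp <|
    eventually_log_two_mul_mul_log_le (ε := 1 / 50) (by norm_num)
  obtain ⟨δ₁, hδ₁, hδX⟩ := exists_forall_le_primeRpowSum_rpow_inv hA hA0 (max X 8)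
  refine ⟨min δ₁ (1 / (200 * A)), by positivity, fun δ x hδ hδ₀ hx ↦ ?_⟩
  have hy := two_le_two_mul_mul_log hx
  rcases le_total x (max X 8) with hxX | hXx
  · exact hxX.trans (hδX δ _ hδ (hδ₀.trans (min_le_left ..)) hy)
  have hlogx : 1 / 2 ≤ log x := by linarith [log_le_log two_pos hx, log_two_gt_d9]
  have hlogy : 0 < log (2 * x * log x) := log_pos (by linarith)
  have hδA : 2 * A * δ ≤ 1 / 100 := by
    have := (le_div_iff₀ (by positivity)).mp (hδ₀.trans (min_le_right ..))
    linarith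
  have hx8 := (le_max_right X 8).trans hXx
  refine le_trans ?_ (mul_div_log_le_primeRpowSum_rpow_inv hA hδ hδA (by nlinarith))
  rw [mul_div_assoc', le_div_iff₀ hlogy]
  calc x * log (2 * x * log x) ≤ x * ((1 + 1 / 50) * log x) := by
        gcongr
        exact hX x ((le_max_left X 8).trans hXx)
    _ = 51 / 100 * (2 * x * log x) := by ring

lemma rpow_div_log_le_primeRpowSum (hA : ∀ t, 1 ≤ t → |mertensSum R t - log t| ≤ A) (hA0 : 0 < A)
    {δ s : ℝ} (hδ : 0 ≤ δ) (hs : 1 ≤ s) :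
    s ^ δ / log (exp (2 * A + 1) * s) ≤ primeRpowSum R δ (exp (2 * A + 1) * s) := by
  have hratio : 1 < exp (2 * A + 1) := one_lt_exp_iff.mpr (by positivity)
  have hwindow := primeRpowSum_add_le hA hδ hs (le_mul_of_one_le_left (by positivity) hratio.le)
    (one_lt_mul_of_lt_of_le hratio hs)
  rw [mul_div_cancel_right₀ _ (by positivity), log_exp, add_sub_cancel_left, one_mul] at hwindow
  linarith [primeRpowSum_nonneg (R := R) δ s]

lemma exists_add_le_exp_mul {c δ : ℝ} (hδ : 0 < δ) : ∃ b, 0 ≤ b ∧ b + c ≤ exp (δ * b) := by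
  have htendsto := tendsto_exp_mul_div_rpow_atTop 1 δ hδ
  obtain ⟨b, hb2, hb0, hbc⟩ := ((htendsto.eventually_ge_atTop 2).and
    ((eventually_gt_atTop 0).and (eventually_ge_atTop c))).exists
  rw [rpow_one, le_div_iff₀ hb0] at hb2
  exact ⟨b, hb0.le, by linarith⟩

lemma exists_forall_large_le_primeRpowSum (hA : ∀ t, 1 ≤ t → |mertensSum R t - log t| ≤ A)
    (hA0 : 0 < A) {δ₀ : ℝ} (hδ₀ : 0 < δ₀) :
    ∃ C, ∀ δ x, δ₀ ≤ δ → 2 ≤ x →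
      x ≤ primeRpowSum R δ (C * (2 * x * log x) ^ (1 / δ)) := by
  obtain ⟨b, hb0, hb⟩ := exists_add_le_exp_mul (c := 2 * A + 1 + 1 / δ₀) hδ₀
  refine ⟨exp (2 * A + 1) * exp b, fun δ x hδ hx ↦ ?_⟩
  have hδ0 : 0 < δ := hδ₀.trans_le hδ
  have hlogx : 1 ≤ 2 * log x := by linarith [log_le_log two_pos hx, log_two_gt_d9]
  have hy := two_le_two_mul_mul_log hx
  have hlogy := log_two_mul_mul_log_le (by linarith : 1 < x)
  set y := 2 * x * log x with hydef
  set s := exp b * y ^ (1 / δ) with hs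
  have hs1 : 1 ≤ s := one_le_mul_of_one_le_of_one_le (one_le_exp hb0)
    (one_le_rpow (by linarith) (by positivity))
  have hsδ : s ^ δ = exp (b * δ) * y := by
    rw [hs, mul_rpow (by positivity) (by positivity), ← exp_mul, ← rpow_mul (by positivity),
      one_div_mul_cancel hδ0.ne', rpow_one]
  have hlogt : log (exp (2 * A + 1) * s) = 2 * A + 1 + b + log y / δ := by
    rw [hs, log_mul (by positivity) (by positivity), log_mul (by positivity) (by positivity),
      log_exp, log_exp, log_rpow (by positivity)]
    ring
  have hlogt_le : log (exp (2 * A + 1) * s) ≤ exp (b * δ) * (2 * log x) := by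
    calc log (exp (2 * A + 1) * s) ≤ (2 * A + 1 + b) * (2 * log x) + 2 * log x / δ₀ := by
          rw [hlogt]
          gcongr
          exact le_mul_of_one_le_right (by positivity) hlogx
      _ = (b + (2 * A + 1 + 1 / δ₀)) * (2 * log x) := by ring
      _ ≤ exp (b * δ) * (2 * log x) := by
          gcongr
          refine hb.trans (exp_le_exp.mpr ?_)
          rw [mul_comm]
          gcongr
  have hlogt0 : 0 < log (exp (2 * A + 1) * s) :=
    log_pos (one_lt_mul_of_lt_of_le (one_lt_exp_iff.mpr (by positivity)) hs1)
  calc x ≤ s ^ δ / log (exp (2 * A + 1) * s) := by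
        rw [le_div_iff₀ hlogt0, hsδ, hydef]
        nlinarith
    _ ≤ primeRpowSum R δ (exp (2 * A + 1) * exp b * y ^ (1 / δ)) := by
        rw [mul_assoc]
        exact rpow_div_log_le_primeRpowSum hA hA0 hδ0.le hs1

lemma exists_le_primeRpowSum (hA : ∀ t, 1 ≤ t → |mertensSum R t - log t| ≤ A) (hA0 : 0 < A) :
    ∃ C, 2 ≤ C ∧ ∀ x δ, 2 ≤ x → 0 < δ →
      x ≤ primeRpowSum R δ (C * (2 * x * log x) ^ (1 / δ)) := by
  obtain ⟨δ₀, hδ₀, hsmall⟩ := exists_forall_small_le_primeRpowSum hA hA0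
  obtain ⟨C, hlarge⟩ := exists_forall_large_le_primeRpowSum hA hA0 hδ₀
  refine ⟨max C 2, le_max_right .., fun x δ hx hδ ↦ ?_⟩
  have hy : 0 ≤ 2 * x * log x := by linarith [two_le_two_mul_mul_log hx]
  rcases le_total δ δ₀ with hle | hge
  · refine (hsmall δ x hδ hle hx).trans (primeRpowSum_mono δ ?_)
    exact le_mul_of_one_le_left (by positivity) (one_le_two.trans (le_max_right ..))
  · refine (hlarge δ x hge hx).trans (primeRpowSum_mono δ ?_)
    gcongr
    exact le_max_left ..

end PrimeRpowSum

lemma betaPIT_le_of_le_primeRpowSum {k : Type*} [Field k] [NumberField k] {x δ t : ℝ}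
    (ht : 2 ≤ t) (hx : x ≤ primeRpowSum (𝓞 k) δ t) : betaPIT k x δ ≤ t := by
  refine csInf_le ⟨2, fun t ht ↦ ht.1⟩ ⟨ht, hx.trans_eq ?_⟩
  change _ = ∑ᶠ v : HeightOneSpectrum (𝓞 k),
    if (primeNorm v : ℝ) ≤ t then (primeNorm v : ℝ) ^ (-1 + δ) else 0
  rw [finsum_eq_sum_of_support_subset (s := primesNormLE (𝓞 k) t) _ fun v hv ↦ ?_]
  · exact Finset.sum_congr rfl fun v hv ↦ (if_pos (mem_primesNormLE.mp hv)).symm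
  · exact mem_primesNormLE.mpr (by_contra fun h ↦ hv (if_neg h))

theorem betaPIT_le_general (k : Type*) [Field k] [NumberField k] :
    ∃ C : ℝ, 0 < C ∧ ∀ x δ : ℝ, 2 ≤ x → 0 < δ →
      betaPIT k x δ ≤ C * (2 * x * Real.log x) ^ (1 / δ) := by
  obtain ⟨A, hA0, hA⟩ := exists_abs_mertensSum_sub_log_le k
  obtain ⟨C, hC, hsum⟩ := exists_le_primeRpowSum hA hA0
  refine ⟨C, by linarith, fun x δ hx hδ ↦ betaPIT_le_of_le_primeRpowSum ?_ (hsum x δ hx hδ)⟩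
  have hpow : 1 ≤ (2 * x * Real.log x) ^ (1 / δ) :=
    Real.one_le_rpow (by linarith [two_le_two_mul_mul_log hx]) (by positivity)
  nlinarith

/-- For a fixed number field `k`, one has `β_k(x; δ) ≪ (2x log x)^{1/δ}` for
`0 < δ < 1` and `x ≥ 2`, the implied constant depending only on `k`. -/
theorem betaPIT_le (k : Type*) [Field k] [NumberField k] :
    ∃ C : ℝ, 0 < C ∧ ∀ x δ : ℝ, 2 ≤ x → 0 < δ → δ < 1 →
      betaPIT k x δ ≤ C * (2 * x * Real.log x) ^ (1 / δ) := by
  obtain ⟨C, hC, hβ⟩ := betaPIT_le_general k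
  exact ⟨C, hC, fun x δ hx hδ _ ↦ hβ x δ hx hδ⟩

end
end
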